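/- arXiv:0801.4715 — 8 statements merged into one kernel-verified Lean document; each statement's English description precedes it below -/
import Mathlib

section
/- Let r > 0, n ≥ 1, let A be a real n×n symmetric positive semidefinite matrix, let d ≥ 0, let b : ℝⁿ → ℝⁿ be Lipschitz continuous on every bounded subset of ℝⁿ and satisfy ‖b(w)‖ ≤ C₁‖w‖ + C_b for all w ∈ ℝⁿ with constants C₁, C_b ≥ 0, and let η : C([-r,0];ℝⁿ) → [0, r] be continuous and satisfy condition (H) with some constant η_ign ∈ (0, r]. Then for every T > 0 and every φ ∈ C([-r,0];ℝⁿ), any two mild solutions u¹, u² on [-r,T] of the delay equation u'(t) + A u(t) + d u(t) = b(u(t − η(u_t))) with the same initial condition φ coincide: u¹(t) = u²(t) for all t ∈ [-r,T]. -/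
noncomputable section

/-- The history segment `u_t ∈ C([-r,0];E)`, `u_t(θ) = u(t+θ)`, of a function `u : ℝ → E`
(defined as the zero function in the degenerate case where `s ↦ u(t+s)` fails to be
continuous on `[-r,0]`; under the hypotheses of the theorems below this case never occurs). -/
def histSeg {E : Type*} [NormedAddCommGroup E] (r : ℝ) (u : ℝ → E) (t : ℝ) :
    C(Set.Icc (-r) (0:ℝ), E) := by
  classical
  exact if h : ContinuousOn (fun s : ℝ => u (t + s)) (Set.Icc (-r) 0) then
    ⟨fun θ => u (t + θ.1), continuousOn_iff_continuous_restrict.mp h⟩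
  else 0

/-- Condition (H): the delay functional `η` ignores the values of `φ(θ)` for
`θ ∈ (-ηign, 0]`, i.e. if `φ₁(θ) = φ₂(θ)` for all `θ ∈ [-r, -ηign]` then `η φ₁ = η φ₂`. -/
def CondH {E : Type*} [NormedAddCommGroup E] (r ηign : ℝ)
    (η : C(Set.Icc (-r) (0:ℝ), E) → ℝ) : Prop :=
  ∀ φ₁ φ₂ : C(Set.Icc (-r) (0:ℝ), E),
    (∀ θ : Set.Icc (-r) (0:ℝ), (θ : ℝ) ∈ Set.Icc (-r) (-ηign) → φ₁ θ = φ₂ θ) →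
    η φ₁ = η φ₂

/-- `u : ℝ → ℝⁿ` is a mild solution on `[-r,T]` of
`u'(t) + Au(t) + du(t) = b(u(t - η(u_t)))` with initial condition `φ`:
it is continuous on `[-r,T]`, coincides with `φ` on `[-r,0]`, and satisfies the
variation-of-constants integral equation (with integrable integrand) on `[0,T]`. -/
def IsMildSolution {n : ℕ} (r : ℝ) (hr : 0 < r) (T d : ℝ)
    (A : Matrix (Fin n) (Fin n) ℝ)
    (b : EuclideanSpace ℝ (Fin n) → EuclideanSpace ℝ (Fin n))
    (η : C(Set.Icc (-r) (0:ℝ), EuclideanSpace ℝ (Fin n)) → ℝ)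
    (φ : C(Set.Icc (-r) (0:ℝ), EuclideanSpace ℝ (Fin n)))
    (u : ℝ → EuclideanSpace ℝ (Fin n)) : Prop :=
  ContinuousOn u (Set.Icc (-r) T) ∧
  (∀ θ : Set.Icc (-r) (0:ℝ), u θ = φ θ) ∧
  ∀ t ∈ Set.Icc (0:ℝ) T,
    IntervalIntegrable
      (fun s => Matrix.toEuclideanLin (NormedSpace.exp (-((t - s) • A)))
        (b (u (s - η (histSeg r u s))) - d • u s)) MeasureTheory.volume 0 t ∧
    u t = Matrix.toEuclideanLin (NormedSpace.exp (-(t • A)))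
            (φ ⟨0, Set.right_mem_Icc.mpr (by linarith)⟩) +
      ∫ s in (0:ℝ)..t, Matrix.toEuclideanLin (NormedSpace.exp (-((t - s) • A)))
          (b (u (s - η (histSeg r u s))) - d • u s)


section helpers
attribute [local instance] Matrix.linftyOpNormedRing Matrix.linftyOpNormedAlgebra

theorem msu_cont {n : ℕ} (A : Matrix (Fin n) (Fin n) ℝ) :
    Continuous (fun τ : ℝ => NormedSpace.exp (-(τ • A))) := by
  letI : NormedAlgebra ℚ (Matrix (Fin n) (Fin n) ℝ) := NormedAlgebra.restrictScalars ℚ ℝ _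
  exact NormedSpace.exp_continuous.comp (by fun_prop)

end helpers

theorem msu_bound {n : ℕ} (A : Matrix (Fin n) (Fin n) ℝ) (T : ℝ) :
    ∃ M : ℝ, 0 ≤ M ∧ ∀ τ ∈ Set.Icc (0:ℝ) T, ∀ v : EuclideanSpace ℝ (Fin n),
      ‖Matrix.toEuclideanLin (NormedSpace.exp (-(τ • A))) v‖ ≤ M * ‖v‖ := by
  let F : Matrix (Fin n) (Fin n) ℝ →ₗ[ℝ]
      (EuclideanSpace ℝ (Fin n) →L[ℝ] EuclideanSpace ℝ (Fin n)) :=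
    (LinearMap.toContinuousLinearMap.toLinearMap).comp
      (Matrix.toEuclideanLin (𝕜 := ℝ) (m := Fin n) (n := Fin n)).toLinearMap
  have hF : Continuous F := LinearMap.continuous_of_finiteDimensional F
  have hc := hF.comp (msu_cont A)
  obtain ⟨M, hM⟩ := (isCompact_Icc (a := (0:ℝ)) (b := T)).exists_bound_of_continuousOn
    hc.continuousOn
  refine ⟨max M 0, le_max_right _ _, fun τ hτ v => ?_⟩
  have h1 := (F (NormedSpace.exp (-(τ • A)))).le_opNorm v
  refine h1.trans ?_
  gcongr
  exact (hM τ hτ).trans (le_max_left _ _)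

theorem msu_hist {E : Type*} [NormedAddCommGroup E] {r T : ℝ} {u : ℝ → E}
    (hu : ContinuousOn u (Set.Icc (-r) T)) {s : ℝ} (hs : s ∈ Set.Icc (0:ℝ) T)
    (θ : Set.Icc (-r) (0:ℝ)) : histSeg r u s θ = u (s + θ) := by
  have h : ContinuousOn (fun x : ℝ => u (s + x)) (Set.Icc (-r) 0) := by
    refine hu.comp (by fun_prop) (fun x hx => ?_)
    have := hs.1; have := hs.2; have := hx.1; have := hx.2
    constructor <;> linarith
  simp only [histSeg, dif_pos h]
  rfl

/-- uniqueness of mild solutions of the state-dependent delay ODE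
`u'(t) + Au(t) + du(t) = b(u(t - η(u_t)))` under condition (H). -/
theorem mild_solution_unique
    {n : ℕ} (hn : 1 ≤ n) (r : ℝ) (hr : 0 < r)
    (A : Matrix (Fin n) (Fin n) ℝ) (hA : A.PosSemidef) (hAs : A.IsSymm)
    (d : ℝ) (hd : 0 ≤ d)
    (b : EuclideanSpace ℝ (Fin n) → EuclideanSpace ℝ (Fin n))
    (hbLip : ∀ s : Set (EuclideanSpace ℝ (Fin n)), Bornology.IsBounded s →
      ∃ L : NNReal, LipschitzOnWith L b s)
    (C₁ Cb : ℝ) (hC₁ : 0 ≤ C₁) (hCb : 0 ≤ Cb)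
    (hbgrow : ∀ w, ‖b w‖ ≤ C₁ * ‖w‖ + Cb)
    (η : C(Set.Icc (-r) (0:ℝ), EuclideanSpace ℝ (Fin n)) → ℝ)
    (hηrange : ∀ φ, η φ ∈ Set.Icc (0:ℝ) r) (hηcont : Continuous η)
    (ηign : ℝ) (hign0 : 0 < ηign) (hignr : ηign ≤ r) (hH : CondH r ηign η)
    (T : ℝ) (hT : 0 < T)
    (φ : C(Set.Icc (-r) (0:ℝ), EuclideanSpace ℝ (Fin n)))
    (u₁ u₂ : ℝ → EuclideanSpace ℝ (Fin n))
    (h₁ : IsMildSolution r hr T d A b η φ u₁)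
    (h₂ : IsMildSolution r hr T d A b η φ u₂) :
    ∀ t ∈ Set.Icc (-r) T, u₁ t = u₂ t := by
  classical
  obtain ⟨c₁, i₁, e₁⟩ := h₁
  obtain ⟨c₂, i₂, e₂⟩ := h₂
  obtain ⟨M, hM0, hM⟩ := msu_bound A T
  obtain ⟨L, hL⟩ := hbLip (u₁ '' Set.Icc (-r) T ∪ u₂ '' Set.Icc (-r) T)
    (((isCompact_Icc.image_of_continuousOn c₁).isBounded).union
      ((isCompact_Icc.image_of_continuousOn c₂).isBounded))
  set K : ℝ := M * (L + d) with hK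
  have hK0 : 0 ≤ K := by positivity
  obtain ⟨δ, hδ0, hδi, hδK⟩ : ∃ δ : ℝ, 0 < δ ∧ δ ≤ ηign ∧ K * δ ≤ 1 / 2 := by
    refine ⟨min ηign (1 / (2 * (K + 1))), by positivity, min_le_left _ _, ?_⟩
    calc K * min ηign (1 / (2 * (K + 1))) ≤ K * (1 / (2 * (K + 1))) := by
          gcongr; exact min_le_right _ _
      _ ≤ 1 / 2 := by
          rw [mul_one_div, div_le_div_iff₀ (by positivity) (by positivity)]; linarith
  have step : ∀ s₀ : ℝ, 0 ≤ s₀ → (∀ t ∈ Set.Icc (-r) T, t ≤ s₀ → u₁ t = u₂ t) →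
      ∀ t ∈ Set.Icc (-r) T, t ≤ s₀ + δ → u₁ t = u₂ t := by
    intro s₀ hs₀ heq
    have hsub : Set.Icc (-r) (min (s₀ + δ) T) ⊆ Set.Icc (-r) T :=
      Set.Icc_subset_Icc_right (min_le_right _ _)
    have hne : (Set.Icc (-r) (min (s₀ + δ) T)).Nonempty := by
      refine ⟨-r, le_refl _, le_min ?_ ?_⟩ <;> linarith
    obtain ⟨p, hp, hpmax⟩ := isCompact_Icc.exists_isMaxOn hne
      ((c₁.sub c₂).norm.mono hsub)
    set m : ℝ := ‖u₁ p - u₂ p‖ with hm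
    have hmax : ∀ t ∈ Set.Icc (-r) T, t ≤ s₀ + δ → ‖u₁ t - u₂ t‖ ≤ m :=
      fun t ht ht' => hpmax ⟨ht.1, le_min ht' ht.2⟩
    have hηeq : ∀ s ∈ Set.Icc (0:ℝ) T, s ≤ s₀ + δ →
        η (histSeg r u₁ s) = η (histSeg r u₂ s) := by
      intro s hs hs'
      apply hH
      intro θ hθ
      rw [msu_hist c₁ hs, msu_hist c₂ hs]
      have := hs.1; have := hs.2; have := hθ.1; have := hθ.2
      refine heq _ ⟨by linarith, by linarith⟩ (by linarith)
    have hm0 : m ≤ 0 := by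
      by_cases hps : p ≤ s₀
      · rw [hm, heq p (hsub hp) hps, sub_self, norm_zero]
      · push Not at hps
        have hpT : p ≤ T := (hsub hp).2
        have hpδ : p ≤ s₀ + δ := hp.2.trans (min_le_left _ _)
        have hp0 : p ∈ Set.Icc (0:ℝ) T := ⟨by linarith, hpT⟩
        obtain ⟨I₁, E₁⟩ := e₁ p hp0
        obtain ⟨I₂, E₂⟩ := e₂ p hp0
        have hdiff : u₁ p - u₂ p = ∫ s in (0:ℝ)..p,
            (Matrix.toEuclideanLin (NormedSpace.exp (-((p - s) • A)))
              (b (u₁ (s - η (histSeg r u₁ s))) - d • u₁ s) -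
             Matrix.toEuclideanLin (NormedSpace.exp (-((p - s) • A)))
              (b (u₂ (s - η (histSeg r u₂ s))) - d • u₂ s)) := by
          rw [intervalIntegral.integral_sub I₁ I₂, E₁, E₂]
          abel
        have I := I₁.sub I₂
        have hmem : s₀ ∈ Set.uIcc (0:ℝ) p := by
          rw [Set.uIcc_of_le hp0.1]; exact ⟨hs₀, hps.le⟩
        rw [← intervalIntegral.integral_add_adjacent_intervals
          (I.mono_set (Set.uIcc_subset_uIcc_left hmem))
          (I.mono_set (Set.uIcc_subset_uIcc_right hmem))] at hdiff
        have hz : ∫ s in (0:ℝ)..s₀,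
            (Matrix.toEuclideanLin (NormedSpace.exp (-((p - s) • A)))
              (b (u₁ (s - η (histSeg r u₁ s))) - d • u₁ s) -
             Matrix.toEuclideanLin (NormedSpace.exp (-((p - s) • A)))
              (b (u₂ (s - η (histSeg r u₂ s))) - d • u₂ s)) = 0 := by
          apply intervalIntegral.integral_zero_ae
          refine Filter.Eventually.of_forall fun s hs => ?_
          rw [Set.uIoc_of_le hs₀] at hs
          have h0 := hs.1; have h1 := hs.2
          have hsT : s ∈ Set.Icc (0:ℝ) T := ⟨h0.le, by linarith⟩
          have hr' := hηrange (histSeg r u₂ s)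
          rw [hηeq s hsT (by linarith), heq s ⟨by linarith, hsT.2⟩ h1,
            heq (s - η (histSeg r u₂ s)) ⟨by linarith [hr'.2], by linarith [hr'.1, hsT.2]⟩
              (by linarith [hr'.1]), sub_self]
        rw [hz, zero_add] at hdiff
        have hb : m ≤ K * m * |p - s₀| := by
          rw [hm, hdiff]
          apply intervalIntegral.norm_integral_le_of_norm_le_const
          intro s hs
          rw [← hdiff, ← hm]
          rw [Set.uIoc_of_le hps.le] at hs
          have h0 := hs.1; have h1 := hs.2
          have hsT : s ∈ Set.Icc (0:ℝ) T := ⟨by linarith, by linarith⟩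
          have hr' := hηrange (histSeg r u₂ s)
          have hq : s - η (histSeg r u₂ s) ∈ Set.Icc (-r) T :=
            ⟨by linarith [hr'.2, hsT.1], by linarith [hr'.1, hsT.2]⟩
          rw [hηeq s hsT (by linarith), ← map_sub]
          refine (hM (p - s) ⟨by linarith, by linarith [hsT.1]⟩ _).trans ?_
          rw [hK, mul_assoc]
          refine mul_le_mul_of_nonneg_left ?_ hM0
          set q := s - η (histSeg r u₂ s) with hqd
          have hB : ‖b (u₁ q) - b (u₂ q)‖ ≤ L * m := by
            refine (hL.norm_sub_le (Or.inl ⟨q, hq, rfl⟩) (Or.inr ⟨q, hq, rfl⟩)).trans ?_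
            gcongr
            exact hmax q hq (by linarith [hr'.1])
          have hD : ‖d • (u₁ s - u₂ s)‖ ≤ d * m := by
            rw [norm_smul, Real.norm_of_nonneg hd]
            gcongr
            exact hmax s ⟨by linarith [hsT.1], hsT.2⟩ (by linarith)
          have : b (u₁ q) - d • u₁ s - (b (u₂ q) - d • u₂ s)
              = (b (u₁ q) - b (u₂ q)) - d • (u₁ s - u₂ s) := by
            rw [smul_sub]; abel
          rw [this, add_mul]
          exact (norm_sub_le _ _).trans (add_le_add hB hD)
        rw [abs_of_pos (by linarith)] at hb
        have hmn : 0 ≤ m := norm_nonneg _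
        have h3 : K * m * (p - s₀) ≤ K * m * δ := by
          gcongr; linarith
        nlinarith
    intro t ht ht'
    exact sub_eq_zero.mp (norm_le_zero_iff.mp ((hmax t ht ht').trans hm0))
  have key : ∀ k : ℕ, ∀ t ∈ Set.Icc (-r) T, t ≤ k * δ → u₁ t = u₂ t := by
    intro k
    induction k with
    | zero =>
      intro t ht ht'
      have ht0 : t ≤ 0 := by simpa using ht'
      rw [i₁ ⟨t, ht.1, ht0⟩, i₂ ⟨t, ht.1, ht0⟩]
    | succ k ih =>
      intro t ht ht'
      refine step (k * δ) (by positivity) ih t ht ?_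
      push_cast at ht'
      linarith
  intro t ht
  obtain ⟨k, hk⟩ := exists_nat_ge (T / δ)
  refine key k t ht (ht.2.trans ?_)
  rwa [div_le_iff₀ hδ0] at hk
end
end

section
/- Let r > 0, n ≥ 1, let A be a real n×n symmetric positive semidefinite matrix, let d ≥ 0, let b : ℝⁿ → ℝⁿ be Lipschitz continuous on every bounded subset of ℝⁿ and satisfy ‖b(w)‖ ≤ C₁‖w‖ + C_b for all w ∈ ℝⁿ with constants C₁, C_b ≥ 0, and let η : C([-r,0];ℝⁿ) → [0, r] be continuous. Then for every φ ∈ C([-r,0];ℝⁿ) there exists a global mild solution, i.e., a continuous function u : [-r,∞) → ℝⁿ with u(θ) = φ(θ) for θ ∈ [-r,0] and u(t) = exp(−tA)·φ(0) + ∫₀ᵗ exp(−(t−s)A)·[ b(u(s − η(u_s))) − d·u(s) ] ds for all t ≥ 0. -/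
noncomputable section

section FDEHelpers
open Set Filter Topology

variable {E : Type*} [NormedAddCommGroup E] [NormedSpace ℝ E]

def tseg (r : ℝ) (v : C(ℝ, E)) (s : ℝ) : C(Set.Icc (-r) (0:ℝ), E) :=
  v.comp ⟨fun θ => s + θ.1, by fun_prop⟩

lemma tseg_apply (r : ℝ) (v : C(ℝ, E)) (s : ℝ) (θ : Set.Icc (-r) (0:ℝ)) :
    tseg r v s θ = v (s + θ.1) := rfl

lemma continuous_tseg (r : ℝ) : Continuous (fun p : C(ℝ, E) × ℝ => tseg r p.1 p.2) := by
  unfold tseg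
  refine Continuous.compCM continuous_fst ?_
  apply ContinuousMap.continuous_of_continuous_uncurry
  simp only [Function.uncurry_def, ContinuousMap.coe_mk]
  fun_prop

lemma continuous_tseg' (r : ℝ) {X : Type*} [TopologicalSpace X] {f : X → C(ℝ, E)} {g : X → ℝ}
    (hf : Continuous f) (hg : Continuous g) : Continuous (fun x => tseg r (f x) (g x)) :=
  (continuous_tseg r).comp (hf.prodMk hg)

def tonelli (r : ℝ) (G : C(Set.Icc (-r) (0:ℝ), E) → E) (hG : Continuous G) (φ : C(ℝ, E))
    (ε : ℝ) (v : C(ℝ, E)) : C(ℝ, E) :=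
  ⟨fun t => φ t + ∫ s in (0:ℝ)..max t 0, G (tseg r v (s - ε)), by
    refine φ.continuous.add ?_
    refine intervalIntegral.continuous_parametric_intervalIntegral_of_continuous ?_ (by fun_prop)
    exact hG.comp (continuous_tseg' r continuous_const (by fun_prop))⟩

lemma tonelli_apply (r : ℝ) (G : C(Set.Icc (-r) (0:ℝ), E) → E) (hG : Continuous G) (φ : C(ℝ, E))
    (ε : ℝ) (v : C(ℝ, E)) (t : ℝ) : tonelli r G hG φ ε v t =
      φ t + ∫ s in (0:ℝ)..max t 0, G (tseg r v (s - ε)) := rfl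

lemma continuous_tonelli_apply (r : ℝ) (G : C(Set.Icc (-r) (0:ℝ), E) → E) (hG : Continuous G)
    (φ : C(ℝ, E)) (t : ℝ) :
    Continuous (fun p : ℝ × C(ℝ, E) => tonelli r G hG φ p.1 p.2 t) := by
  simp only [tonelli_apply]
  refine continuous_const.add ?_
  refine intervalIntegral.continuous_parametric_intervalIntegral_of_continuous ?_ continuous_const
  exact hG.comp (continuous_tseg' r (by fun_prop) (by fun_prop))

lemma tonelli_agree (r : ℝ) (G : C(Set.Icc (-r) (0:ℝ), E) → E) (hG : Continuous G)
    (φ : C(ℝ, E)) (ε : ℝ) (hε : 0 < ε) (m : ℕ) : ∀ t ≤ m * ε,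
    (tonelli r G hG φ ε)^[m + 1] φ t = (tonelli r G hG φ ε)^[m] φ t := by
  induction m with
  | zero =>
    intro t ht
    have ht0 : t ≤ 0 := by simpa using ht
    simp [tonelli_apply, max_eq_right ht0]
  | succ m ih =>
    intro t ht
    rw [Function.iterate_succ_apply' _ (m + 1), Function.iterate_succ_apply' _ m, tonelli_apply,
      tonelli_apply, ← Function.iterate_succ_apply' (tonelli r G hG φ ε) m]
    congr 1
    apply intervalIntegral.integral_congr
    intro s hs
    rw [uIcc_of_le (le_max_right _ _)] at hs
    dsimp only
    congr 1
    ext1 θ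
    rw [tseg_apply, tseg_apply]
    apply ih
    have h1 := θ.2.2
    have h2 : max t 0 ≤ (m + 1 : ℝ) * ε := max_le (by simpa using ht) (by positivity)
    have h3 := hs.2
    linarith

lemma tonelli_G_bound (r : ℝ) (G : C(Set.Icc (-r) (0:ℝ), E) → E)
    (K : ℝ) (hK : 0 ≤ K) (hGb : ∀ ψ, ‖G ψ‖ ≤ K * (‖ψ‖ + 1)) (c : ℝ) (hc : 1 ≤ c)
    (ε : ℝ) (hε : 0 < ε) (v : C(ℝ, E)) (hv : ∀ t, ‖v t‖ + 1 ≤ c * Real.exp (K * max t 0))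
    (s : ℝ) (hs : 0 ≤ s) :
    ‖G (tseg r v (s - ε))‖ ≤ c * (Real.exp (K * s) * K) := by
  refine (hGb _).trans ?_
  have h1 : 1 ≤ Real.exp (K * s) := Real.one_le_exp (by positivity)
  have h2 : ‖tseg r v (s - ε)‖ ≤ c * Real.exp (K * s) - 1 := by
    rw [ContinuousMap.norm_le _ (by nlinarith)]
    intro θ
    rw [tseg_apply]
    have h3 := hv (s - ε + θ.1)
    have h4 : max (s - ε + θ.1) 0 ≤ s := max_le (by linarith [θ.2.2]) hs
    have h5 : Real.exp (K * max (s - ε + θ.1) 0) ≤ Real.exp (K * s) :=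
      Real.exp_le_exp.2 (mul_le_mul_of_nonneg_left h4 hK)
    nlinarith
  nlinarith

lemma tonelli_bound (r : ℝ) (G : C(Set.Icc (-r) (0:ℝ), E) → E) (hG : Continuous G)
    (K : ℝ) (hK : 0 ≤ K) (hGb : ∀ ψ, ‖G ψ‖ ≤ K * (‖ψ‖ + 1))
    (φ : C(ℝ, E)) (M : ℝ) (hM : ∀ t, ‖φ t‖ ≤ M) (ε : ℝ) (hε : 0 < ε) (m : ℕ) : ∀ t,
    ‖(tonelli r G hG φ ε)^[m] φ t‖ + 1 ≤ (M + 1) * Real.exp (K * max t 0) := by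
  have hM0 : 0 ≤ M := (norm_nonneg _).trans (hM 0)
  induction m with
  | zero =>
    intro t
    have h1 : 1 ≤ Real.exp (K * max t 0) := Real.one_le_exp (by positivity)
    have := hM t
    simp only [Function.iterate_zero, id_eq]
    nlinarith
  | succ m ih =>
    intro t
    rw [Function.iterate_succ_apply', tonelli_apply]
    have hτ : (0:ℝ) ≤ max t 0 := le_max_right _ _
    have h1 := fun s hs => tonelli_G_bound r G K hK hGb (M+1) (by linarith) ε hε _ ih s hs
    have h2 : ‖∫ s in (0:ℝ)..max t 0, G (tseg r ((tonelli r G hG φ ε)^[m] φ) (s - ε))‖ ≤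
        ∫ s in (0:ℝ)..max t 0, (M+1) * (Real.exp (K * s) * K) := by
      apply intervalIntegral.norm_integral_le_of_norm_le hτ
      · exact Eventually.of_forall fun s hs => h1 s hs.1.le
      · apply Continuous.intervalIntegrable
        fun_prop
    have h3 : ∫ s in (0:ℝ)..max t 0, (M+1) * (Real.exp (K * s) * K) =
        (M+1) * Real.exp (K * max t 0) - (M+1) * Real.exp (K * 0) := by
      apply intervalIntegral.integral_eq_sub_of_hasDerivAt
        (f := fun s => (M+1) * Real.exp (K * s))
      · intro s _
        have : HasDerivAt (fun s : ℝ => K * s) K s := by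
          simpa using (hasDerivAt_id s).const_mul K
        exact this.exp.const_mul _
      · apply Continuous.intervalIntegrable
        fun_prop
    have h4 := norm_add_le (φ t)
      (∫ s in (0:ℝ)..max t 0, G (tseg r ((tonelli r G hG φ ε)^[m] φ) (s - ε)))
    have h5 := hM t
    rw [h3] at h2
    simp only [mul_zero, Real.exp_zero] at h2
    linarith

lemma tonelli_lip (r : ℝ) (G : C(Set.Icc (-r) (0:ℝ), E) → E) (hG : Continuous G)
    (K : ℝ) (hK : 0 ≤ K) (hGb : ∀ ψ, ‖G ψ‖ ≤ K * (‖ψ‖ + 1)) (c : ℝ) (hc : 1 ≤ c)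
    (φ : C(ℝ, E)) (ε : ℝ) (hε : 0 < ε) (v : C(ℝ, E))
    (hv : ∀ t, ‖v t‖ + 1 ≤ c * Real.exp (K * max t 0)) (T : ℝ) (hT : 0 ≤ T) (x y : ℝ)
    (hx : x ≤ T) (hy : y ≤ T) :
    dist (tonelli r G hG φ ε v x) (tonelli r G hG φ ε v y) ≤
      dist (φ x) (φ y) + c * (Real.exp (K * T) * K) * |x - y| := by
  rw [tonelli_apply, tonelli_apply]
  refine (dist_add_add_le _ _ _ _).trans ?_
  gcongr
  have hint : ∀ a b : ℝ, IntervalIntegrable (fun s => G (tseg r v (s - ε)))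
      MeasureTheory.volume a b := fun a b => Continuous.intervalIntegrable
        (hG.comp (continuous_tseg' r continuous_const (by fun_prop))) _ _
  rw [dist_eq_norm, intervalIntegral.integral_interval_sub_left (hint _ _) (hint _ _)]
  have h1 : ‖∫ s in (max y 0)..(max x 0), G (tseg r v (s - ε))‖ ≤
      c * (Real.exp (K * T) * K) * |max x 0 - max y 0| := by
    apply intervalIntegral.norm_integral_le_of_norm_le_const
    intro s hs
    have hs0 : 0 ≤ s := by
      have := hs.1
      exact (le_min (le_max_right _ _) (le_max_right _ _)).trans this.le
    have hsT : s ≤ T := hs.2.trans (max_le (max_le hy hT) (max_le hx hT))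
    refine (tonelli_G_bound r G K hK hGb c hc ε hε v hv s hs0).trans ?_
    gcongr
  refine h1.trans ?_
  refine mul_le_mul_of_nonneg_left ?_ (by positivity)
  exact abs_max_sub_max_le_abs x y 0

lemma tonelli_approx (r : ℝ) (G : C(Set.Icc (-r) (0:ℝ), E) → E) (hG : Continuous G)
    (K : ℝ) (hK : 0 ≤ K) (hGb : ∀ ψ, ‖G ψ‖ ≤ K * (‖ψ‖ + 1))
    (φ : C(ℝ, E)) (M : ℝ) (hM : ∀ t, ‖φ t‖ ≤ M) (ε : ℝ) (hε : 0 < ε) (N : ℕ) :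
    ∃ w : C(ℝ, E), (∀ t, ‖w t‖ + 1 ≤ (M + 1) * Real.exp (K * max t 0)) ∧
      (∀ t, ‖tonelli r G hG φ ε w t‖ + 1 ≤ (M + 1) * Real.exp (K * max t 0)) ∧
      ∀ t ≤ N * ε, tonelli r G hG φ ε w t = w t := by
  refine ⟨(tonelli r G hG φ ε)^[N] φ, tonelli_bound r G hG K hK hGb φ M hM ε hε _, ?_, ?_⟩
  · have := tonelli_bound r G hG K hK hGb φ M hM ε hε (N + 1)
    rwa [Function.iterate_succ_apply'] at this
  · have := tonelli_agree r G hG φ ε hε N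
    rwa [Function.iterate_succ_apply'] at this

lemma fde_exists [ProperSpace E] (r : ℝ) (G : C(Set.Icc (-r) (0:ℝ), E) → E) (hG : Continuous G)
    (K : ℝ) (hK : 0 ≤ K) (hGb : ∀ ψ, ‖G ψ‖ ≤ K * (‖ψ‖ + 1))
    (φ : C(ℝ, E)) (M : ℝ) (hM : ∀ t, ‖φ t‖ ≤ M) :
    ∃ v : C(ℝ, E), ∀ t, v t = φ t + ∫ s in (0:ℝ)..max t 0, G (tseg r v s) := by
  have hM0 : 0 ≤ M := (norm_nonneg _).trans (hM 0)
  obtain ⟨ε, hε, hεlim, hmε⟩ : ∃ ε : ℕ → ℝ, (∀ k, 0 < ε k) ∧ Tendsto ε atTop (𝓝 0) ∧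
      ∀ k : ℕ, (((k+1)*(k+1) : ℕ) : ℝ) * ε k = k + 1 :=
    ⟨fun k => 1 / ((k : ℝ) + 1), fun k => by positivity,
      tendsto_one_div_add_atTop_nhds_zero_nat (𝕜 := ℝ), fun k => by push_cast; field_simp⟩
  choose w hwb hub hag using fun k : ℕ =>
    tonelli_approx r G hG K hK hGb φ M hM (ε k) (hε k) ((k+1)*(k+1))
  obtain ⟨u, hu⟩ : ∃ u : ℕ → C(ℝ, E), ∀ k, u k = tonelli r G hG φ (ε k) (w k) :=
    ⟨_, fun k => rfl⟩
  have huw : ∀ (k : ℕ) (t : ℝ), t ≤ k + 1 → u k t = w k t := fun k t ht => by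
    rw [hu]
    exact hag k t (by rw [hmε]; exact ht)
  have huu : ∀ (k : ℕ) (t : ℝ), t ≤ k + 1 → tonelli r G hG φ (ε k) (u k) t = u k t := fun k t ht => by
    conv_rhs => rw [hu]
    rw [tonelli_apply, tonelli_apply]
    congr 1
    apply intervalIntegral.integral_congr
    intro s hs
    rw [uIcc_of_le (le_max_right _ _)] at hs
    dsimp only
    congr 1
    ext1 θ
    rw [tseg_apply, tseg_apply]
    apply huw
    have h1 := θ.2.2
    have h2 : max t 0 ≤ (k + 1 : ℝ) := max_le ht (by positivity)
    have h3 := hs.2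
    have := hε k
    linarith
  have : T2Space (UniformOnFun ℝ E {K : Set ℝ | IsCompact K}) :=
    UniformOnFun.t2Space_of_covering (Set.eq_univ_iff_forall.mpr
      (fun x => Set.mem_sUnion_of_mem (Set.mem_singleton x) isCompact_singleton))
  have hcl : IsClosedEmbedding
      (UniformOnFun.ofFun {K : Set ℝ | IsCompact K} ∘ (fun f : C(ℝ, E) => (f : ℝ → E))) :=
    (ContinuousMap.isUniformEmbedding_toUniformOnFunIsCompact).isClosedEmbedding
  have hcomp : IsCompact (closure (range u)) := by
    refine ArzelaAscoli.isCompact_closure_of_isClosedEmbedding (fun K hK => hK) hcl ?_ ?_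
    · intro Q _
      refine Equicontinuous.equicontinuousOn ?_ Q
      intro x
      refine Metric.equicontinuousAt_of_continuity_modulus
        (fun y => dist (φ x) (φ y) + (M + 1) * (Real.exp (K * (|x| + 1)) * K) * |x - y|) ?_ _ ?_
      · have : Continuous (fun y => dist (φ x) (φ y) +
          (M + 1) * (Real.exp (K * (|x| + 1)) * K) * |x - y|) := by fun_prop
        simpa using this.tendsto x
      · filter_upwards [Metric.ball_mem_nhds x one_pos] with y hy
        rintro ⟨_, k, rfl⟩
        rw [Metric.mem_ball, Real.dist_eq] at hy
        have hy2 := (abs_lt.1 hy).2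
        have hx := le_abs_self x
        simp only [Function.comp_apply, hu]
        exact tonelli_lip r G hG K hK hGb (M+1) (by linarith) φ (ε k) (hε k) (w k) (hwb k)
          (|x| + 1) (by positivity) x y (by linarith) (by linarith)
    · intro Q _ x _
      refine ⟨Metric.closedBall 0 ((M + 1) * Real.exp (K * max x 0)),
        isCompact_closedBall _ _, ?_⟩
      rintro _ ⟨k, rfl⟩
      rw [mem_closedBall_zero_iff, hu]
      linarith [hub k x]
  obtain ⟨v, -, hv⟩ := hcomp.ultrafilter_le_nhds ((hyperfilter ℕ).map u) (by
    rw [le_principal_iff]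
    exact Filter.mem_of_superset (Filter.range_mem_map) subset_closure)
  have hle : (hyperfilter ℕ : Filter ℕ) ≤ atTop := by
    rw [← Nat.cofinite_eq_atTop]; exact hyperfilter_le_cofinite
  have huv : Tendsto u (hyperfilter ℕ) (𝓝 v) := hv
  have hε0 : Tendsto ε (hyperfilter ℕ) (𝓝 0) :=
    hεlim.mono_left hle
  refine ⟨v, fun t => ?_⟩
  have h1 : Tendsto (fun k => tonelli r G hG φ (ε k) (u k) t) (hyperfilter ℕ)
      (𝓝 (tonelli r G hG φ 0 v t)) :=
    ((continuous_tonelli_apply r G hG φ t).tendsto (0, v)).comp (hε0.prodMk_nhds huv)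
  have h2 : Tendsto (fun k => u k t) (hyperfilter ℕ) (𝓝 (v t)) :=
    ((continuous_eval_const t).tendsto v).comp huv
  have h3 : ∀ᶠ k : ℕ in hyperfilter ℕ, tonelli r G hG φ (ε k) (u k) t = u k t := by
    apply hle
    obtain ⟨N, hN⟩ := exists_nat_ge t
    filter_upwards [eventually_ge_atTop N] with k hk
    apply huu
    have : (N : ℝ) ≤ k := by exact_mod_cast hk
    linarith
  have h4 := tendsto_nhds_unique (h1.congr' h3) h2
  rw [← h4, tonelli_apply]
  simp

lemma histSeg_eq_tseg (r : ℝ) (v : C(ℝ, E)) (s : ℝ) : histSeg r v s = tseg r v s := by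
  have h : ContinuousOn (fun x : ℝ => v (s + x)) (Set.Icc (-r) 0) := by fun_prop
  unfold histSeg
  rw [dif_pos h]
  rfl

end FDEHelpers

section MatExp

lemma expMat_eq {n : ℕ} (A : Matrix (Fin n) (Fin n) ℝ) (t s : ℝ) (x : EuclideanSpace ℝ (Fin n)) :
    Matrix.toEuclideanLin (NormedSpace.exp (-((t - s) • A))) x =
      NormedSpace.exp ((s - t) • Matrix.toEuclideanCLM (n := Fin n) (𝕜 := ℝ) A) x := by
  have hc : Continuous (Matrix.toEuclideanCLM (n := Fin n) (𝕜 := ℝ)) :=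
    LinearMap.continuous_of_finiteDimensional
      (Matrix.toEuclideanCLM (n := Fin n) (𝕜 := ℝ)).toAlgEquiv.toLinearMap
  have key : ∀ X : Matrix (Fin n) (Fin n) ℝ,
      Matrix.toEuclideanCLM (n := Fin n) (𝕜 := ℝ) (NormedSpace.exp X) =
        NormedSpace.exp (Matrix.toEuclideanCLM (n := Fin n) (𝕜 := ℝ) X) := by
    let f : Matrix (Fin n) (Fin n) ℝ →+* (EuclideanSpace ℝ (Fin n) →L[ℝ] EuclideanSpace ℝ (Fin n)) :=
      ((Matrix.toEuclideanCLM (n := Fin n) (𝕜 := ℝ)).toAlgEquiv : _ →+* _)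
    let _ : NormedRing (Matrix (Fin n) (Fin n) ℝ) := Matrix.linftyOpNormedRing
    let _ : NormedAlgebra ℝ (Matrix (Fin n) (Fin n) ℝ) := Matrix.linftyOpNormedAlgebra
    let _ : NormedAlgebra ℚ (Matrix (Fin n) (Fin n) ℝ) := NormedAlgebra.restrictScalars ℚ ℝ _
    intro X
    have h := NormedSpace.map_exp f hc X
    exact h
  rw [← map_smul, ← key, ← neg_smul, neg_sub]
  rfl

lemma hasDerivAt_expMat {n : ℕ} (A : Matrix (Fin n) (Fin n) ℝ) (t s : ℝ)
    (p : ℝ → EuclideanSpace ℝ (Fin n)) (p' : EuclideanSpace ℝ (Fin n)) (hp : HasDerivAt p p' s) :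
    HasDerivAt (fun s => Matrix.toEuclideanLin (NormedSpace.exp (-((t - s) • A))) (p s))
      (Matrix.toEuclideanLin (NormedSpace.exp (-((t - s) • A)))
        (Matrix.toEuclideanLin A (p s) + p')) s := by
  simp only [expMat_eq]
  have h := (hasDerivAt_exp_smul_const (𝕂 := ℝ)
    (Matrix.toEuclideanCLM (n := Fin n) (𝕜 := ℝ) A) (s - t)).comp_sub_const s t
  have h2 := h.clm_apply hp
  rw [map_add]
  exact h2

lemma continuous_expMat {n : ℕ} (A : Matrix (Fin n) (Fin n) ℝ) (t : ℝ)
    (p : ℝ → EuclideanSpace ℝ (Fin n)) (hp : Continuous p) :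
    Continuous (fun s => Matrix.toEuclideanLin (NormedSpace.exp (-((t - s) • A))) (p s)) := by
  simp only [expMat_eq]
  have h : Continuous (fun s : ℝ =>
      NormedSpace.exp ((s - t) • Matrix.toEuclideanCLM (n := Fin n) (𝕜 := ℝ) A)) :=
    continuous_iff_continuousAt.2 fun s => ((hasDerivAt_exp_smul_const (𝕂 := ℝ)
      (Matrix.toEuclideanCLM (n := Fin n) (𝕜 := ℝ) A) (s - t)).comp_sub_const s t).continuousAt
  exact h.clm_apply hp

end MatExp

/-- global existence of a mild solution of the state-dependent delay ODE
`u'(t) + Au(t) + du(t) = b(u(t - η(u_t)))` for every continuous initial function `φ`. -/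
theorem mild_solution_exists_globally
    {n : ℕ} (hn : 1 ≤ n) (r : ℝ) (hr : 0 < r)
    (A : Matrix (Fin n) (Fin n) ℝ) (hA : A.PosSemidef) (hAs : A.IsSymm)
    (d : ℝ) (hd : 0 ≤ d)
    (b : EuclideanSpace ℝ (Fin n) → EuclideanSpace ℝ (Fin n))
    (hbLip : ∀ s : Set (EuclideanSpace ℝ (Fin n)), Bornology.IsBounded s →
      ∃ L : NNReal, LipschitzOnWith L b s)
    (C₁ Cb : ℝ) (hC₁ : 0 ≤ C₁) (hCb : 0 ≤ Cb)
    (hbgrow : ∀ w, ‖b w‖ ≤ C₁ * ‖w‖ + Cb)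
    (η : C(Set.Icc (-r) (0:ℝ), EuclideanSpace ℝ (Fin n)) → ℝ)
    (hηrange : ∀ φ, η φ ∈ Set.Icc (0:ℝ) r) (hηcont : Continuous η)
    (φ : C(Set.Icc (-r) (0:ℝ), EuclideanSpace ℝ (Fin n))) :
    ∃ u : ℝ → EuclideanSpace ℝ (Fin n),
      ContinuousOn u (Set.Ici (-r)) ∧
      ∀ T : ℝ, 0 < T → IsMildSolution r hr T d A b η φ u := by
  obtain ⟨L, hL⟩ : ∃ L : EuclideanSpace ℝ (Fin n) →L[ℝ] EuclideanSpace ℝ (Fin n),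
      ∀ x, L x = Matrix.toEuclideanLin A x :=
    ⟨LinearMap.toContinuousLinearMap (Matrix.toEuclideanLin A), fun x => rfl⟩
  have hb : Continuous b := by
    rw [continuous_iff_continuousAt]
    intro x
    obtain ⟨l, hl⟩ := hbLip (Metric.ball x 1) Metric.isBounded_ball
    exact hl.continuousOn.continuousAt (Metric.ball_mem_nhds x one_pos)
  have h0mem : (0:ℝ) ∈ Set.Icc (-r) 0 := Set.right_mem_Icc.mpr (by linarith)
  have hmem : ∀ ψ, -η ψ ∈ Set.Icc (-r) (0:ℝ) := fun ψ =>
    ⟨by linarith [(hηrange ψ).2], by linarith [(hηrange ψ).1]⟩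
  let F : C(Set.Icc (-r) (0:ℝ), EuclideanSpace ℝ (Fin n)) → EuclideanSpace ℝ (Fin n) :=
    fun ψ => b (ψ ⟨-η ψ, hmem ψ⟩) - d • ψ ⟨0, h0mem⟩
  have hF : Continuous F := by
    have h1 : Continuous (fun ψ : C(Set.Icc (-r) (0:ℝ), EuclideanSpace ℝ (Fin n)) =>
        ψ ⟨-η ψ, hmem ψ⟩) :=
      continuous_eval.comp (continuous_id.prodMk (hηcont.neg.subtype_mk hmem))
    exact (hb.comp h1).sub ((continuous_eval_const _).const_smul d)
  let G : C(Set.Icc (-r) (0:ℝ), EuclideanSpace ℝ (Fin n)) → EuclideanSpace ℝ (Fin n) :=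
    fun ψ => F ψ - L (ψ ⟨0, h0mem⟩)
  have hG : Continuous G :=
    hF.sub (L.continuous.comp (continuous_eval_const _))
  have hGb : ∀ ψ, ‖G ψ‖ ≤ (C₁ + Cb + d + ‖L‖) * (‖ψ‖ + 1) := by
    intro ψ
    have h1 := ψ.norm_coe_le_norm ⟨-η ψ, hmem ψ⟩
    have h2 := ψ.norm_coe_le_norm ⟨0, h0mem⟩
    have h3 := hbgrow (ψ ⟨-η ψ, hmem ψ⟩)
    have h4 := L.le_opNorm (ψ ⟨0, h0mem⟩)
    have h5 : ‖d • ψ ⟨0, h0mem⟩‖ = d * ‖ψ ⟨0, h0mem⟩‖ := by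
      rw [norm_smul, Real.norm_of_nonneg hd]
    have h6 : ‖G ψ‖ ≤ ‖b (ψ ⟨-η ψ, hmem ψ⟩)‖ + ‖d • ψ ⟨0, h0mem⟩‖ + ‖L (ψ ⟨0, h0mem⟩)‖ :=
      (norm_sub_le _ _).trans (add_le_add_left (norm_sub_le _ _) _)
    have h7 := mul_le_mul_of_nonneg_left h1 hC₁
    have h8 := mul_le_mul_of_nonneg_left h2 hd
    have h9 := mul_le_mul_of_nonneg_left h2 (norm_nonneg L)
    have h10 := mul_nonneg hCb (norm_nonneg ψ)
    have h11 := norm_nonneg L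
    nlinarith
  let Φ : C(ℝ, EuclideanSpace ℝ (Fin n)) :=
    ⟨fun t => φ (Set.projIcc (-r) 0 (by linarith) t),
      φ.continuous.comp (continuous_projIcc (h := by linarith))⟩
  have hΦ : ∀ θ : Set.Icc (-r) (0:ℝ), Φ θ = φ θ := fun θ => by
    simp [Φ]
  have hΦ0 : ∀ t, 0 ≤ t → Φ t = φ ⟨0, h0mem⟩ := fun t ht => by
    simp only [Φ, ContinuousMap.coe_mk]
    rw [Set.projIcc_of_right_le _ ht]
  obtain ⟨v, hv⟩ := fde_exists r G hG (C₁ + Cb + d + ‖L‖) (by positivity) hGb Φ ‖φ‖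
    (fun t => φ.norm_coe_le_norm _)
  have hseg : Continuous (fun s => tseg r v s) := continuous_tseg' r continuous_const continuous_id
  have hFs : ∀ s, b (v (s - η (histSeg r v s))) - d • v s = F (tseg r v s) := fun s => by
    simp only [F, histSeg_eq_tseg, tseg_apply, add_zero, sub_eq_add_neg]
  have hexp : ∀ t, Continuous (fun s : ℝ =>
      Matrix.toEuclideanLin (NormedSpace.exp (-((t - s) • A))) (F (tseg r v s))) :=
    fun t => continuous_expMat A t _ (hF.comp hseg)
  refine ⟨v, v.continuous.continuousOn, fun T hT => ⟨v.continuous.continuousOn, ?_, ?_⟩⟩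
  · intro θ
    rw [hv, hΦ, max_eq_right θ.2.2]
    simp
  · intro t ht
    simp only [hFs]
    have hint := (hexp t).intervalIntegrable (μ := MeasureTheory.volume) 0 t
    refine ⟨hint, ?_⟩
    let p : ℝ → EuclideanSpace ℝ (Fin n) :=
      fun t => φ ⟨0, h0mem⟩ + ∫ s in (0:ℝ)..t, G (tseg r v s)
    have hp : ∀ s, HasDerivAt p (G (tseg r v s)) s := fun s =>
      ((hG.comp hseg).integral_hasStrictDerivAt 0 s).hasDerivAt.const_add _
    have hpv : ∀ s, 0 ≤ s → p s = v s := fun s hs => by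
      rw [hv, hΦ0 s hs, max_eq_left hs]
    have hder : ∀ s ∈ Set.uIcc 0 t, HasDerivAt
        (fun s => Matrix.toEuclideanLin (NormedSpace.exp (-((t - s) • A))) (p s))
        (Matrix.toEuclideanLin (NormedSpace.exp (-((t - s) • A))) (F (tseg r v s))) s := by
      intro s hs
      rw [Set.uIcc_of_le ht.1] at hs
      have h := hasDerivAt_expMat A t s p _ (hp s)
      convert h using 2
      rw [hpv s hs.1]
      simp only [G, hL, tseg_apply, add_zero]
      abel
    rw [intervalIntegral.integral_eq_sub_of_hasDerivAt hder hint]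
    rw [← hpv t ht.1]
    simp [p, Matrix.toLpLin_one]
end
end

section
/- Let r > 0, n ≥ 1, let A be a real n×n symmetric positive semidefinite matrix, let d ≥ 0, let b : ℝⁿ → ℝⁿ be Lipschitz continuous on every bounded subset of ℝⁿ and satisfy ‖b(w)‖ ≤ C₁‖w‖ + C_b for all w ∈ ℝⁿ with constants C₁, C_b ≥ 0, and let η : C([-r,0];ℝⁿ) → [0, r] be continuous and satisfy condition (H) with some constant η_ign ∈ (0, r]. Fix T > 0. Let φ, φ¹, φ², … ∈ C([-r,0];ℝⁿ) with ‖φᵏ − φ‖_C → 0 as k → ∞, and let u, u¹, u², … be mild solutions on [-r,T] with initial conditions φ, φ¹, φ², … respectively. Then sup_{t ∈ [-r,T]} ‖uᵏ(t) − u(t)‖ → 0 as k → ∞; in particular, for every t ∈ [0,T], ‖uᵏ_t − u_t‖_C → 0 as k → ∞. -/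
noncomputable section

open scoped Matrix.Norms.L2Operator in
theorem semi_bound {n : ℕ} (A : Matrix (Fin n) (Fin n) ℝ) (T : ℝ)  :
  ∃ K : ℝ, 0 ≤ K ∧ ∀ s ∈ Set.Icc (0:ℝ) T, ∀ v, ‖Matrix.toEuclideanLin (NormedSpace.exp (-(s • A))) v‖ ≤ K * ‖v‖ := by
  letI : NormedAlgebra ℚ (Matrix (Fin n) (Fin n) ℝ) := NormedAlgebra.restrictScalars ℚ ℝ _
  have hc : ContinuousOn (fun s : ℝ => ‖NormedSpace.exp (-(s • A))‖) (Set.Icc 0 T) := by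
    apply Continuous.continuousOn
    refine continuous_norm.comp ?_
    exact (NormedSpace.exp_continuous (𝔸 := Matrix (Fin n) (Fin n) ℝ)).comp (by fun_prop)
  obtain ⟨K, hK⟩ := (isCompact_Icc.image_of_continuousOn hc).bddAbove
  refine ⟨max K 0, le_max_right _ _, fun s hs v => ?_⟩
  refine (Matrix.l2_opNorm_mulVec _ v).trans ?_
  gcongr
  exact (hK ⟨s, hs, rfl⟩).trans (le_max_left _ _)

theorem gron (r τ a lam : ℝ) (hr : 0 < r) (hτ : 0 ≤ τ) (ha : 0 ≤ a) (hl : 0 ≤ lam) (w : ℝ → ℝ)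
    (hw : ContinuousOn w (Set.Icc (-r) τ)) (hw0 : ∀ t, 0 ≤ w t)
    (h1 : ∀ t ∈ Set.Icc (-r) 0, w t ≤ a)
    (h2 : ∀ X : ℝ, 0 ≤ X → (∀ s ∈ Set.Icc (-r) τ, w s ≤ X * Real.exp (lam * s)) →
      ∀ t ∈ Set.Icc 0 τ, w t ≤ a + 1/2 * (X * Real.exp (lam * t))) :
    ∀ t ∈ Set.Icc (-r) τ, w t ≤ 2 * a * Real.exp (lam * r) * Real.exp (lam * τ) := by
  have hc : ContinuousOn (fun t => w t * Real.exp (-(lam * t))) (Set.Icc (-r) τ) :=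
    hw.mul (by fun_prop)
  obtain ⟨m, hm, hmax⟩ := isCompact_Icc.exists_isMaxOn (Set.nonempty_Icc.2 (by linarith)) hc
  set X := w m * Real.exp (-(lam * m)) with hX
  have hX0 : 0 ≤ X := mul_nonneg (hw0 _) (Real.exp_pos _).le
  have hle : ∀ s ∈ Set.Icc (-r) τ, w s ≤ X * Real.exp (lam * s) := by
    intro s hs
    have := hmax hs
    simp only [Set.mem_ofPred_eq] at this
    have e : w s = w s * Real.exp (-(lam * s)) * Real.exp (lam * s) := by
      rw [mul_assoc, ← Real.exp_add]; simp
    rw [e]; gcongr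
  have em : w m = X * Real.exp (lam * m) := by
      rw [hX, mul_assoc, ← Real.exp_add]; simp
  have e1 : 1 ≤ Real.exp (lam * r) := Real.one_le_exp (by positivity)
  have key : X ≤ 2 * a * Real.exp (lam * r) := by
    rcases le_total m 0 with h | h
    · have := h1 m ⟨hm.1, h⟩
      have e2 : Real.exp (-(lam * m)) ≤ Real.exp (lam * r) := by
        apply Real.exp_le_exp.2; nlinarith [hm.1]
      have : X ≤ a * Real.exp (lam * r) := by
        rw [hX]; gcongr
      nlinarith [mul_nonneg ha (Real.exp_pos (lam * r)).le]
    · have := h2 X hX0 hle m ⟨h, hm.2⟩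
      have e3 : 1 ≤ Real.exp (lam * m) := Real.one_le_exp (by positivity)
      rw [em] at this
      nlinarith [mul_nonneg ha (sub_nonneg.2 e1), mul_nonneg hX0 (sub_nonneg.2 e3)]
  intro t ht
  refine (hle t ht).trans ?_
  have : Real.exp (lam * t) ≤ Real.exp (lam * τ) := by
    apply Real.exp_le_exp.2; nlinarith [ht.2]
  gcongr

theorem int_bd {E : Type*} [NormedAddCommGroup E] [NormedSpace ℝ E] (F : ℝ → E) (t T c D lam : ℝ)
   (h0 : 0 ≤ t) (htT : t ≤ T) (hc : 0 ≤ c) (hD : 0 ≤ D) (hl : 0 < lam)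
   (hF : ∀ s ∈ Set.Icc 0 t, ‖F s‖ ≤ c + D * Real.exp (lam * s)) :
   ‖∫ s in (0:ℝ)..t, F s‖ ≤ c * T + D / lam * Real.exp (lam * t) := by
  have := intervalIntegral.norm_integral_le_of_norm_le (f := F) (μ := MeasureTheory.volume) (g := fun s => c + D * Real.exp (lam * s)) h0
    (Filter.Eventually.of_forall fun s hs => hF s ⟨hs.1.le, hs.2⟩)
    (Continuous.intervalIntegrable (by fun_prop) _ _)
  refine this.trans ?_
  have e : ∫ s in (0:ℝ)..t, (c + D * Real.exp (lam * s)) = (c * t + D / lam * Real.exp (lam * t)) - (c * 0 + D / lam * Real.exp (lam * 0)) := by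
    apply intervalIntegral.integral_eq_sub_of_hasDerivAt (f := fun s => c * s + D / lam * Real.exp (lam * s))
    · intro x _
      have h1 : HasDerivAt (fun s => lam * s) lam x := by simpa using (hasDerivAt_id x).const_mul lam
      have h3 : HasDerivAt (fun s => c * s) c x := by simpa using (hasDerivAt_id x).const_mul c
      have h4 := h3.add (h1.exp.const_mul (D / lam))
      have e5 : c + D / lam * (Real.exp (lam * x) * lam) = c + D * Real.exp (lam * x) := by
        field_simp
      rw [e5] at h4
      exact h4
    · exact Continuous.intervalIntegrable (by fun_prop) _ _
  rw [e]
  have : 0 ≤ D / lam := by positivity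
  have : c * t ≤ c * T := by gcongr
  simp; linarith

def MS {E : Type*} [NormedAddCommGroup E] [NormedSpace ℝ E] (r T d : ℝ) (S : ℝ → E →ₗ[ℝ] E)
    (b : E → E) (η : C(Set.Icc (-r) (0:ℝ), E) → ℝ) (u : ℝ → E) : Prop :=
  ContinuousOn u (Set.Icc (-r) T) ∧
  ∀ t ∈ Set.Icc (0:ℝ) T,
    IntervalIntegrable (fun s => S (t - s) (b (u (s - η (histSeg r u s))) - d • u s))
      MeasureTheory.volume 0 t ∧
    u t = S t (u 0) + ∫ s in (0:ℝ)..t, S (t - s) (b (u (s - η (histSeg r u s))) - d • u s)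

theorem histSeg_apply' {E : Type*} [NormedAddCommGroup E] (r T : ℝ) (u : ℝ → E)
    (hu : ContinuousOn u (Set.Icc (-r) T)) (t : ℝ) (ht : t ∈ Set.Icc 0 T)
    (θ : Set.Icc (-r) (0:ℝ)) : histSeg r u t θ = u (t + θ.1) := by
  have h : ContinuousOn (fun s : ℝ => u (t + s)) (Set.Icc (-r) 0) := by
    refine hu.comp (by fun_prop) ?_
    intro s hs
    exact ⟨by linarith [hs.1, ht.1], by linarith [hs.2, ht.2]⟩
  unfold histSeg
  rw [dif_pos h]
  rfl

theorem apriori {E : Type*} [NormedAddCommGroup E] [NormedSpace ℝ E] (r T d : ℝ)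
    (hr : 0 < r) (hT : 0 < T) (hd : 0 ≤ d)
    (S : ℝ → E →ₗ[ℝ] E) (K : ℝ) (hK : 0 ≤ K) (hS : ∀ s ∈ Set.Icc 0 T, ∀ v, ‖S s v‖ ≤ K * ‖v‖)
    (b : E → E) (C₁ Cb : ℝ) (hC₁ : 0 ≤ C₁) (hCb : 0 ≤ Cb)
    (hbgrow : ∀ w, ‖b w‖ ≤ C₁ * ‖w‖ + Cb)
    (η : C(Set.Icc (-r) (0:ℝ), E) → ℝ) (hηrange : ∀ φ, η φ ∈ Set.Icc (0:ℝ) r)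
    (R : ℝ) (hR : 0 ≤ R) :
    ∃ B : ℝ, ∀ u, MS r T d S b η u → (∀ t ∈ Set.Icc (-r) 0, ‖u t‖ ≤ R) →
      ∀ t ∈ Set.Icc (-r) T, ‖u t‖ ≤ B := by
  set lam := 2 * (K * (C₁ + d)) + 1 with hlam
  have hl : 0 < lam := by positivity
  refine ⟨2 * (R + K * R + K * Cb * T) * Real.exp (lam * r) * Real.exp (lam * T), ?_⟩
  intro u hu hi
  refine gron r T _ lam hr hT.le (by positivity) hl.le (fun t => ‖u t‖) hu.1.norm
    (fun _ => norm_nonneg _) ?_ ?_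
  · intro t ht
    have := hi t ht
    have : 0 ≤ K * R + K * Cb * T := by positivity
    linarith [hi t ht]
  · intro X hX hle t ht
    obtain ⟨hint, heq⟩ := hu.2 t ht
    have h0 : ‖u 0‖ ≤ R := hi 0 ⟨by linarith, le_rfl⟩
    have hI := int_bd (fun s => S (t - s) (b (u (s - η (histSeg r u s))) - d • u s)) t T
      (K * Cb) (K * (C₁ + d) * X) lam ht.1 ht.2 (by positivity) (by positivity) hl (by
        intro s hs
        refine (hS (t - s) ⟨by linarith [hs.2], by linarith [hs.1, ht.2]⟩ _).trans ?_
        have hη := hηrange (histSeg r u s)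
        have q1 := hle (s - η (histSeg r u s)) ⟨by linarith [hs.1, hη.2], by linarith [hs.2, hη.1, ht.2]⟩
        have q2 := hle s ⟨by linarith [hs.1], by linarith [hs.2, ht.2]⟩
        have q3 : Real.exp (lam * (s - η (histSeg r u s))) ≤ Real.exp (lam * s) := by
          apply Real.exp_le_exp.2; nlinarith [hη.1]
        have q4 : ‖u (s - η (histSeg r u s))‖ ≤ X * Real.exp (lam * s) := q1.trans (by gcongr)
        have q5 : ‖b (u (s - η (histSeg r u s))) - d • u s‖ ≤
            (C₁ * (X * Real.exp (lam * s)) + Cb) + d * (X * Real.exp (lam * s)) := by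
          refine (norm_sub_le _ _).trans (add_le_add ((hbgrow _).trans ?_) ?_)
          · gcongr
          · rw [norm_smul, Real.norm_of_nonneg hd]; gcongr
        calc _ ≤ K * ((C₁ * (X * Real.exp (lam * s)) + Cb) + d * (X * Real.exp (lam * s))) := by
              gcongr
          _ = _ := by ring)
    have hS0 : ‖S t (u 0)‖ ≤ K * R := (hS t ht _).trans (by gcongr)
    have hhalf : K * (C₁ + d) * X / lam ≤ 1 / 2 * X := by
      rw [div_le_iff₀ hl]
      nlinarith
    have : ‖u t‖ ≤ K * R + (K * Cb * T + K * (C₁ + d) * X / lam * Real.exp (lam * t)) := by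
      conv_lhs => rw [heq]
      exact (norm_add_le _ _).trans (add_le_add hS0 hI)
    have h6 : K * (C₁ + d) * X / lam * Real.exp (lam * t) ≤ 1 / 2 * X * Real.exp (lam * t) := by
      gcongr
    show ‖u t‖ ≤ _
    linarith

theorem diff_bound {E : Type*} [NormedAddCommGroup E] [NormedSpace ℝ E] (r T d : ℝ)
    (hr : 0 < r) (hT : 0 < T) (hd : 0 ≤ d)
    (S : ℝ → E →ₗ[ℝ] E) (K : ℝ) (hK : 0 ≤ K) (hS : ∀ s ∈ Set.Icc 0 T, ∀ v, ‖S s v‖ ≤ K * ‖v‖)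
    (b : E → E) (B : ℝ) (L : NNReal) (hL : LipschitzOnWith L b (Metric.closedBall 0 B))
    (η : C(Set.Icc (-r) (0:ℝ), E) → ℝ) (hηrange : ∀ φ, η φ ∈ Set.Icc (0:ℝ) r) :
    ∃ M : ℝ, 0 < M ∧ ∀ u v, MS r T d S b η u → MS r T d S b η v →
      (∀ t ∈ Set.Icc (-r) T, ‖u t‖ ≤ B) → (∀ t ∈ Set.Icc (-r) T, ‖v t‖ ≤ B) →
      ∀ ε : ℝ, 0 ≤ ε → (∀ t ∈ Set.Icc (-r) 0, ‖v t - u t‖ ≤ ε) →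
      ∀ τ ∈ Set.Icc 0 T,
      (∀ s ∈ Set.Icc 0 τ, ‖u (s - η (histSeg r v s)) - u (s - η (histSeg r u s))‖ ≤ ε) →
      ∀ t ∈ Set.Icc (-r) τ, ‖v t - u t‖ ≤ M * ε := by
  set lam := 2 * (K * (L + d)) + 1 with hlam
  have hl : 0 < lam := by positivity
  refine ⟨2 * (1 + K + K * L * T) * Real.exp (lam * r) * Real.exp (lam * T), by positivity, ?_⟩
  intro u v hu hv hub hvb ε hε hi τ hτ hdel t ht
  have main := gron r τ ((1 + K + K * L * T) * ε) lam hr hτ.1 (by positivity) hl.le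
    (fun t => ‖v t - u t‖)
    ((hv.1.sub hu.1).norm.mono (Set.Icc_subset_Icc_right hτ.2))
    (fun _ => norm_nonneg _) ?_ ?_ t ht
  · refine main.trans ?_
    have : Real.exp (lam * τ) ≤ Real.exp (lam * T) := by
      apply Real.exp_le_exp.2; nlinarith [hτ.2]
    calc _ ≤ 2 * ((1 + K + K * L * T) * ε) * Real.exp (lam * r) * Real.exp (lam * T) := by gcongr
      _ = _ := by ring
  · intro t ht
    have : 0 ≤ (K + K * L * T) * ε := by positivity
    linarith [hi t ht]
  · intro X hX hle t ht
    have htT : t ∈ Set.Icc 0 T := ⟨ht.1, ht.2.trans hτ.2⟩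
    obtain ⟨hint, heq⟩ := hu.2 t htT
    obtain ⟨hint', heq'⟩ := hv.2 t htT
    have h0 : ‖v 0 - u 0‖ ≤ ε := hi 0 ⟨by linarith, le_rfl⟩
    have hI := int_bd (fun s => S (t - s) (b (v (s - η (histSeg r v s))) - d • v s) -
        S (t - s) (b (u (s - η (histSeg r u s))) - d • u s)) t T
      (K * L * ε) (K * (L + d) * X) lam ht.1 htT.2 (by positivity) (by positivity) hl (by
        intro s hs
        rw [← map_sub]
        refine (hS (t - s) ⟨by linarith [hs.2], by linarith [hs.1, htT.2]⟩ _).trans ?_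
        have hη := hηrange (histSeg r v s)
        have hη' := hηrange (histSeg r u s)
        have m1 : s - η (histSeg r v s) ∈ Set.Icc (-r) τ :=
          ⟨by linarith [hs.1, hη.2], by linarith [hs.2, hη.1, ht.2]⟩
        have m2 : s - η (histSeg r u s) ∈ Set.Icc (-r) τ :=
          ⟨by linarith [hs.1, hη'.2], by linarith [hs.2, hη'.1, ht.2]⟩
        have q1 := hle _ m1
        have q2 := hle s ⟨by linarith [hs.1], by linarith [hs.2, ht.2]⟩
        have q3 : Real.exp (lam * (s - η (histSeg r v s))) ≤ Real.exp (lam * s) := by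
          apply Real.exp_le_exp.2; nlinarith [hη.1]
        have q4 : ‖v (s - η (histSeg r v s)) - u (s - η (histSeg r v s))‖
            ≤ X * Real.exp (lam * s) := q1.trans (by gcongr)
        have q6 := hdel s ⟨hs.1, hs.2.trans ht.2⟩
        have q7 : ‖b (v (s - η (histSeg r v s))) - b (u (s - η (histSeg r u s)))‖ ≤
            L * (X * Real.exp (lam * s) + ε) := by
          have := hL.norm_sub_le (x := v (s - η (histSeg r v s))) (y := u (s - η (histSeg r u s)))
            (by simpa using hvb _ ⟨m1.1, m1.2.trans hτ.2⟩)
            (by simpa using hub _ ⟨m2.1, m2.2.trans hτ.2⟩)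
          refine this.trans ?_
          gcongr
          exact (norm_sub_le_norm_sub_add_norm_sub _ _ _).trans (add_le_add q4 q6)
        have q5 : ‖(b (v (s - η (histSeg r v s))) - d • v s) -
            (b (u (s - η (histSeg r u s))) - d • u s)‖ ≤
            L * (X * Real.exp (lam * s) + ε) + d * (X * Real.exp (lam * s)) := by
          have e : (b (v (s - η (histSeg r v s))) - d • v s) -
            (b (u (s - η (histSeg r u s))) - d • u s) =
            (b (v (s - η (histSeg r v s))) - b (u (s - η (histSeg r u s)))) - d • (v s - u s) := by
            rw [smul_sub]; abel
          rw [e]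
          refine (norm_sub_le _ _).trans (add_le_add q7 ?_)
          rw [norm_smul, Real.norm_of_nonneg hd]; gcongr
        calc _ ≤ K * (L * (X * Real.exp (lam * s) + ε) + d * (X * Real.exp (lam * s))) := by
              gcongr
          _ = _ := by ring)
    rw [intervalIntegral.integral_sub hint' hint] at hI
    have hS0 : ‖S t (v 0 - u 0)‖ ≤ K * ε := (hS t htT _).trans (by gcongr)
    have hhalf : K * (L + d) * X / lam ≤ 1 / 2 * X := by
      rw [div_le_iff₀ hl]
      nlinarith
    have : ‖v t - u t‖ ≤ K * ε + (K * L * ε * T + K * (L + d) * X / lam * Real.exp (lam * t)) := by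
      rw [heq, heq', add_sub_add_comm, ← map_sub]
      exact (norm_add_le _ _).trans (add_le_add hS0 hI)
    have h6 : K * (L + d) * X / lam * Real.exp (lam * t) ≤ 1 / 2 * X * Real.exp (lam * t) := by
      gcongr
    show ‖v t - u t‖ ≤ _
    linarith

/-- delays converge uniformly -/
theorem delay_conv {E : Type*} [NormedAddCommGroup E] (r T : ℝ) (hr : 0 < r)
    (η : C(Set.Icc (-r) (0:ℝ), E) → ℝ) (hηcont : Continuous η)
    (ηign : ℝ) (hH : CondH r ηign η)
    (u : ℝ → E) (hu : ContinuousOn u (Set.Icc (-r) T))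
    (τ τ' : ℝ) (h0 : 0 ≤ τ) (hτT : τ ≤ T) (h1 : τ' ≤ τ + ηign) (h2 : τ' ≤ T) (δ : ℝ) (hδ : 0 < δ) :
    ∃ ρ > 0, ∀ v : ℝ → E, ContinuousOn v (Set.Icc (-r) T) →
      (∀ t ∈ Set.Icc (-r) τ, ‖v t - u t‖ ≤ ρ) →
      ∀ s ∈ Set.Icc 0 τ', |η (histSeg r v s) - η (histSeg r u s)| < δ := by
  have hrτ : -r ≤ τ := by linarith
  let c : ℝ → ℝ := fun x => max (-r) (min x τ)
  have hc : Continuous c := by fun_prop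
  have hcm : ∀ x, c x ∈ Set.Icc (-r) τ := fun x =>
    ⟨le_max_left _ _, max_le hrτ (min_le_right _ _)⟩
  have hcid : ∀ x ∈ Set.Icc (-r) τ, c x = x := fun x hx => by
    simp only [c]; rw [min_eq_left hx.2, max_eq_right hx.1]
  have hcc : ∀ v : ℝ → E, ContinuousOn v (Set.Icc (-r) T) → Continuous (fun x => v (c x)) :=
    fun v hv => hv.comp_continuous hc (fun x => ⟨(hcm x).1, (hcm x).2.trans hτT⟩)
  let G : ∀ v : ℝ → E, ContinuousOn v (Set.Icc (-r) T) → C(ℝ, C(Set.Icc (-r) (0:ℝ), E)) :=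
    fun v hv => ContinuousMap.curry
      ⟨fun p : ℝ × Set.Icc (-r) (0:ℝ) => v (c (p.1 + p.2.1)), (hcc v hv).comp (by fun_prop)⟩
  have hG : ∀ v hv s θ, G v hv s θ = v (c (s + θ.1)) := fun v hv s θ => rfl
  have hGη : ∀ v hv, ∀ s ∈ Set.Icc 0 τ', η (histSeg r v s) = η (G v hv s) := by
    intro v hv s hs
    apply hH
    intro θ hθ
    rw [histSeg_apply' r T v hv s ⟨hs.1, hs.2.trans h2⟩, hG v hv, hcid]
    exact ⟨by linarith [hs.1, hθ.1], by linarith [hs.2, hθ.2]⟩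
  have hcomp : IsCompact (G u hu '' Set.Icc 0 τ') := isCompact_Icc.image (G u hu).continuous
  have hunif := hcomp.uniformContinuousAt_of_continuousAt η (fun a _ => hηcont.continuousAt)
    (Metric.dist_mem_uniformity hδ)
  obtain ⟨ρ, hρ, hsub⟩ := Metric.mem_uniformity_dist.1 hunif
  refine ⟨ρ / 2, by positivity, ?_⟩
  intro v hv hvu s hs
  rw [hGη v hv s hs, hGη u hu s hs]
  have hd : dist (G u hu s) (G v hv s) < ρ := by
    refine lt_of_le_of_lt ((ContinuousMap.dist_le (by positivity : (0:ℝ) ≤ ρ / 2)).2 ?_)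
      (by linarith : ρ / 2 < ρ)
    intro θ
    rw [dist_comm, dist_eq_norm, hG v hv, hG u hu]
    exact hvu _ (hcm _)
  have := hsub hd ⟨s, hs, rfl⟩
  rw [abs_sub_comm]
  exact this

theorem step {E : Type*} [NormedAddCommGroup E] [NormedSpace ℝ E] (r T d : ℝ)
    (hr : 0 < r) (hT : 0 < T) (hd : 0 ≤ d)
    (S : ℝ → E →ₗ[ℝ] E) (K : ℝ) (hK : 0 ≤ K) (hS : ∀ s ∈ Set.Icc 0 T, ∀ v, ‖S s v‖ ≤ K * ‖v‖)
    (b : E → E) (B : ℝ) (L : NNReal) (hL : LipschitzOnWith L b (Metric.closedBall 0 B))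
    (η : C(Set.Icc (-r) (0:ℝ), E) → ℝ) (hηrange : ∀ φ, η φ ∈ Set.Icc (0:ℝ) r)
    (hηcont : Continuous η) (ηign : ℝ) (hH : CondH r ηign η)
    (u : ℝ → E) (useq : ℕ → ℝ → E)
    (hu : MS r T d S b η u) (huseq : ∀ k, MS r T d S b η (useq k))
    (hub : ∀ t ∈ Set.Icc (-r) T, ‖u t‖ ≤ B) (hvb : ∀ k, ∀ t ∈ Set.Icc (-r) T, ‖useq k t‖ ≤ B)
    (τ τ' : ℝ) (h0 : 0 ≤ τ) (hτT : τ ≤ T) (h1 : τ' ≤ τ + ηign) (h2 : τ' ≤ T) (h3 : 0 ≤ τ')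
    (hτ : TendstoUniformlyOn useq u Filter.atTop (Set.Icc (-r) τ)) :
    TendstoUniformlyOn useq u Filter.atTop (Set.Icc (-r) τ') := by
  obtain ⟨M, hM, hdb⟩ := diff_bound r T d hr hT hd S K hK hS b B L hL η hηrange
  rw [Metric.tendstoUniformlyOn_iff] at hτ ⊢
  intro ε hε
  set e := ε / (2 * M) with he
  have hepos : 0 < e := by positivity
  have huc := isCompact_Icc.uniformContinuousOn_of_continuous hu.1
  obtain ⟨δ, hδ, hδu⟩ := Metric.uniformContinuousOn_iff.1 huc e hepos
  obtain ⟨ρ, hρ, hρv⟩ := delay_conv r T hr η hηcont ηign hH u hu.1 τ τ' h0 hτT h1 h2 δ hδ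
  filter_upwards [hτ ρ hρ, hτ e hepos] with k hk1 hk2
  intro t ht
  have := hdb u (useq k) hu (huseq k) hub (hvb k) e hepos.le
    (fun t ht => by
      rw [← dist_eq_norm, dist_comm]; exact (hk2 t ⟨ht.1, ht.2.trans h0⟩).le)
    τ' ⟨h3, h2⟩ (by
      intro s hs
      have q := hρv (useq k) (huseq k).1 (fun t ht => by
        rw [← dist_eq_norm, dist_comm]; exact (hk1 t ht).le) s hs
      have a1 := hηrange (histSeg r (useq k) s)
      have a2 := hηrange (histSeg r u s)
      rw [← dist_eq_norm]
      refine (hδu _ ⟨by linarith [hs.1, a1.2], by linarith [hs.2, a1.1]⟩ _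
        ⟨by linarith [hs.1, a2.2], by linarith [hs.2, a2.1]⟩ ?_).le
      rw [Real.dist_eq, sub_sub_sub_cancel_left, abs_sub_comm]
      exact q) t ht
  rw [dist_comm, dist_eq_norm]
  have e2 : M * e = ε / 2 := by rw [he]; field_simp
  linarith

/-- continuous dependence of mild solutions on the initial data (property 4
of Theorem 1): if `‖φᵏ − φ‖_C → 0` then the corresponding mild solutions converge
uniformly on `[-r,T]`, and in particular the history segments converge in `C([-r,0];ℝⁿ)`
for every `t ∈ [0,T]`. -/
theorem mild_solutions_continuous_dependence
    {n : ℕ} (hn : 1 ≤ n) (r : ℝ) (hr : 0 < r)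
    (A : Matrix (Fin n) (Fin n) ℝ) (hA : A.PosSemidef) (hAs : A.IsSymm)
    (d : ℝ) (hd : 0 ≤ d)
    (b : EuclideanSpace ℝ (Fin n) → EuclideanSpace ℝ (Fin n))
    (hbLip : ∀ s : Set (EuclideanSpace ℝ (Fin n)), Bornology.IsBounded s →
      ∃ L : NNReal, LipschitzOnWith L b s)
    (C₁ Cb : ℝ) (hC₁ : 0 ≤ C₁) (hCb : 0 ≤ Cb)
    (hbgrow : ∀ w, ‖b w‖ ≤ C₁ * ‖w‖ + Cb)
    (η : C(Set.Icc (-r) (0:ℝ), EuclideanSpace ℝ (Fin n)) → ℝ)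
    (hηrange : ∀ φ, η φ ∈ Set.Icc (0:ℝ) r) (hηcont : Continuous η)
    (ηign : ℝ) (hign0 : 0 < ηign) (hignr : ηign ≤ r) (hH : CondH r ηign η)
    (T : ℝ) (hT : 0 < T)
    (φ : C(Set.Icc (-r) (0:ℝ), EuclideanSpace ℝ (Fin n)))
    (φseq : ℕ → C(Set.Icc (-r) (0:ℝ), EuclideanSpace ℝ (Fin n)))
    (u : ℝ → EuclideanSpace ℝ (Fin n))
    (useq : ℕ → ℝ → EuclideanSpace ℝ (Fin n))
    (hu : IsMildSolution r hr T d A b η φ u)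
    (huseq : ∀ k, IsMildSolution r hr T d A b η (φseq k) (useq k))
    (hconv : Filter.Tendsto (fun k => ‖φseq k - φ‖) Filter.atTop (nhds 0)) :
    TendstoUniformlyOn (fun k => useq k) u Filter.atTop (Set.Icc (-r) T) ∧
    ∀ t ∈ Set.Icc (0:ℝ) T,
      Filter.Tendsto (fun k => ‖histSeg r (useq k) t - histSeg r u t‖)
        Filter.atTop (nhds 0) := by
  obtain ⟨K, hK, hS⟩ := semi_bound A T
  have conv : ∀ ψ v, IsMildSolution r hr T d A b η ψ v →
      MS r T d (fun t => Matrix.toEuclideanLin (NormedSpace.exp (-(t • A)))) b η v := by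
    intro ψ v hv
    refine ⟨hv.1, fun t ht => ⟨(hv.2.2 t ht).1, ?_⟩⟩
    have h := (hv.2.2 t ht).2
    rw [← hv.2.1] at h
    exact h
  have hu' := conv _ _ hu
  have huseq' := fun k => conv _ _ (huseq k)
  have hφ : Filter.Tendsto φseq Filter.atTop (nhds φ) := tendsto_iff_norm_sub_tendsto_zero.2 hconv
  obtain ⟨R0, hR0⟩ := (Metric.isBounded_range_of_tendsto φseq hφ).exists_norm_le
  set R := max (max R0 ‖φ‖) 0 with hRdef
  have hR : 0 ≤ R := le_max_right _ _
  obtain ⟨B, hB⟩ := apriori r T d hr hT hd _ K hK hS b C₁ Cb hC₁ hCb hbgrow η hηrange R hR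
  have hub := hB u hu' (fun t ht => by
    have := hu.2.1 ⟨t, ht⟩
    simp only at this
    rw [this]
    exact (φ.norm_coe_le_norm _).trans ((le_max_right _ _).trans (le_max_left _ _)))
  have hvb := fun k => hB (useq k) (huseq' k) (fun t ht => by
    have := (huseq k).2.1 ⟨t, ht⟩
    simp only at this
    rw [this]
    exact ((φseq k).norm_coe_le_norm _).trans
      ((hR0 _ ⟨k, rfl⟩).trans ((le_max_left _ _).trans (le_max_left _ _))))
  obtain ⟨L, hL⟩ := hbLip (Metric.closedBall 0 B) Metric.isBounded_closedBall
  have hind : ∀ j : ℕ, TendstoUniformlyOn useq u Filter.atTop (Set.Icc (-r) (min T (j * ηign))) := by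
    intro j
    induction j with
    | zero =>
      have : min T (((0:ℕ):ℝ) * ηign) = 0 := by simp [hT.le]
      rw [this, Metric.tendstoUniformlyOn_iff]
      intro ε hε
      filter_upwards [Metric.tendsto_nhds.1 hφ ε hε] with k hk t ht
      have e1 := hu.2.1 ⟨t, ht⟩
      have e2 := (huseq k).2.1 ⟨t, ht⟩
      simp only at e1 e2
      rw [e1, e2, dist_comm]
      exact (ContinuousMap.dist_apply_le_dist _).trans_lt hk
    | succ j ih =>
      have hj : 0 ≤ (j:ℝ) * ηign := by positivity
      refine step r T d hr hT hd _ K hK hS b B L hL η hηrange hηcont ηign hH u useq hu' huseq'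
        hub hvb _ _ (le_min hT.le hj) (min_le_left _ _) ?_ (min_le_left _ _)
        (le_min hT.le (by positivity)) ih
      push_cast
      rcases le_total T (j * ηign) with h | h
      · rw [min_eq_left h]; exact (min_le_left _ _).trans (by linarith)
      · rw [min_eq_right h]; exact (min_le_right _ _).trans (by linarith)
  have hfin : TendstoUniformlyOn (fun k => useq k) u Filter.atTop (Set.Icc (-r) T) := by
    obtain ⟨j, hj⟩ := exists_nat_ge (T / ηign)
    have := hind j
    rwa [min_eq_left ((div_le_iff₀ hign0).1 hj)] at this
  refine ⟨hfin, fun t ht => ?_⟩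
  rw [Metric.tendsto_nhds]
  intro ε hε
  filter_upwards [Metric.tendstoUniformlyOn_iff.1 hfin (ε / 2) (by positivity)] with k hk
  rw [Real.dist_eq, sub_zero, abs_norm]
  refine lt_of_le_of_lt ((ContinuousMap.norm_le _ (by positivity : 0 ≤ ε / 2)).2 ?_) (by linarith)
  intro θ
  rw [ContinuousMap.sub_apply, histSeg_apply' r T _ (huseq k).1 t ht, histSeg_apply' r T _ hu.1 t ht,
    ← dist_eq_norm, dist_comm]
  exact (hk _ ⟨by linarith [θ.2.1, ht.1], by linarith [θ.2.2, ht.2]⟩).le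
end
end

section
/- Let r > 0, n ≥ 1, let A be a real n×n symmetric positive semidefinite matrix, let d ≥ 0, let b : ℝⁿ → ℝⁿ, and let η : C([-r,0];ℝⁿ) → [0, r]. Let T > 0, φ ∈ C([-r,0];ℝⁿ), and let u : [-r,T] → ℝⁿ be a mild solution of u'(t) + A u(t) + d u(t) = b(u(t − η(u_t))) with initial condition φ. Then for every τ ∈ [0,T], the function v : [-r, T−τ] → ℝⁿ defined by v(s) = u(τ + s) is a mild solution on [-r, T−τ] of the same equation with initial condition u_τ (where u_τ(θ) = u(τ+θ) for θ ∈ [-r,0]). In particular, the solution operators satisfy the semigroup property S_t S_τ = S_{t+τ}. -/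
noncomputable section

theorem histSeg_shift {E : Type*} [NormedAddCommGroup E] (r : ℝ) (u : ℝ → E) (τ s : ℝ) :
    histSeg r (fun x => u (τ + x)) s = histSeg r u (τ + s) := by
  have e : ∀ x, u (τ + (s + x)) = u (τ + s + x) := fun x => by rw [add_assoc]
  by_cases h : ContinuousOn (fun x : ℝ => u (τ + s + x)) (Set.Icc (-r) 0)
  · have h' : ContinuousOn (fun x : ℝ => u (τ + (s + x))) (Set.Icc (-r) 0) := by
      simpa only [e] using h
    unfold histSeg
    rw [dif_pos h, dif_pos h']
    ext θ
    exact e θ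
  · have h' : ¬ ContinuousOn (fun x : ℝ => u (τ + (s + x))) (Set.Icc (-r) 0) := by
      simpa only [e] using h
    unfold histSeg
    rw [dif_neg h, dif_neg h']

theorem expL_add {n : ℕ} (A : Matrix (Fin n) (Fin n) ℝ) (x y : ℝ)
    (w : EuclideanSpace ℝ (Fin n)) :
    Matrix.toEuclideanLin (NormedSpace.exp (-((x + y) • A))) w =
      Matrix.toEuclideanLin (NormedSpace.exp (-(x • A)))
        (Matrix.toEuclideanLin (NormedSpace.exp (-(y • A))) w) := by
  have h : NormedSpace.exp (-((x + y) • A)) =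
      NormedSpace.exp (-(x • A)) * NormedSpace.exp (-(y • A)) := by
    rw [add_smul, neg_add]
    apply Matrix.exp_add_of_commute
    exact (((Commute.refl A).smul_left x).smul_right y).neg_left.neg_right
  rw [h]
  simp [Matrix.toEuclideanLin, Matrix.toLpLin_apply, Matrix.mulVec_mulVec]

/-- time shift of a mild solution: if `u` is a mild solution on `[-r,T]` with
initial condition `φ`, then for `τ ∈ [0,T]` the shifted function `v(s) = u(τ+s)` is a mild
solution on `[-r, T-τ]` with initial condition the history segment `u_τ` (this is the
semigroup property `S_t S_τ = S_{t+τ}` of the solution operators). -/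
theorem mild_solution_shift
    {n : ℕ} (hn : 1 ≤ n) (r : ℝ) (hr : 0 < r)
    (A : Matrix (Fin n) (Fin n) ℝ) (hA : A.PosSemidef) (hAs : A.IsSymm)
    (d : ℝ) (hd : 0 ≤ d)
    (b : EuclideanSpace ℝ (Fin n) → EuclideanSpace ℝ (Fin n))
    (η : C(Set.Icc (-r) (0:ℝ), EuclideanSpace ℝ (Fin n)) → ℝ)
    (hηrange : ∀ φ, η φ ∈ Set.Icc (0:ℝ) r)
    (T : ℝ) (hT : 0 < T)
    (φ : C(Set.Icc (-r) (0:ℝ), EuclideanSpace ℝ (Fin n)))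
    (u : ℝ → EuclideanSpace ℝ (Fin n))
    (hu : IsMildSolution r hr T d A b η φ u)
    (τ : ℝ) (hτ : τ ∈ Set.Icc (0:ℝ) T) :
    IsMildSolution r hr (T - τ) d A b η (histSeg r u τ) (fun s => u (τ + s)) := by
  obtain ⟨hc, hφ, hI⟩ := hu
  obtain ⟨h0, h1⟩ := hτ
  have hseg : ContinuousOn (fun s : ℝ => u (τ + s)) (Set.Icc (-r) 0) := by
    apply hc.comp (by fun_prop)
    intro s hs
    exact ⟨by linarith [hs.1], by linarith [hs.2]⟩
  have hval : ∀ θ : Set.Icc (-r) (0:ℝ), histSeg r u τ θ = u (τ + θ) := by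
    intro θ
    unfold histSeg
    rw [dif_pos hseg]
    rfl
  refine ⟨?_, fun θ => (hval θ).symm, ?_⟩
  · apply hc.comp (by fun_prop)
    intro s hs
    exact ⟨by linarith [hs.1], by linarith [hs.2]⟩
  intro t ht
  obtain ⟨t0, t1⟩ := ht
  set g : ℝ → EuclideanSpace ℝ (Fin n) :=
    fun s => b (u (s - η (histSeg r u s))) - d • u s with hg
  set F : ℝ → EuclideanSpace ℝ (Fin n) := fun s =>
    Matrix.toEuclideanLin (NormedSpace.exp (-((τ + t - s) • A))) (g s) with hF
  have hfun : (fun s => Matrix.toEuclideanLin (NormedSpace.exp (-((t - s) • A)))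
        (b (u (τ + (s - η (histSeg r (fun x => u (τ + x)) s)))) - d • u (τ + s)))
      = fun s => F (τ + s) := by
    funext s
    have e : τ + t - (τ + s) = t - s := by ring
    simp only [hF, hg, histSeg_shift, e, ← add_sub_assoc]
  obtain ⟨i1, e1⟩ := hI (τ + t) ⟨by linarith, by linarith⟩
  obtain ⟨i2, e2⟩ := hI τ ⟨h0, h1⟩
  change IntervalIntegrable F _ _ _ at i1
  change u (τ + t) = _ + ∫ s in (0:ℝ)..(τ + t), F s at e1
  have iA : IntervalIntegrable F MeasureTheory.volume 0 τ :=
    i1.mono_set (by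
      rw [Set.uIcc_of_le h0, Set.uIcc_of_le (by linarith)]
      exact Set.Icc_subset_Icc le_rfl (by linarith))
  have iB : IntervalIntegrable F MeasureTheory.volume τ (τ + t) :=
    i1.mono_set (by
      rw [Set.uIcc_of_le (by linarith), Set.uIcc_of_le (by linarith)]
      exact Set.Icc_subset_Icc h0 le_rfl)
  constructor
  · change IntervalIntegrable (fun s => Matrix.toEuclideanLin (NormedSpace.exp (-((t - s) • A)))
        (b (u (τ + (s - η (histSeg r (fun x => u (τ + x)) s)))) - d • u (τ + s))) _ _ _
    rw [hfun]
    have := iB.comp_add_left τ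
    simpa using this
  · change u (τ + t) = _ + ∫ s in (0:ℝ)..t,
      (fun s => Matrix.toEuclideanLin (NormedSpace.exp (-((t - s) • A)))
        (b (u (τ + (s - η (histSeg r (fun x => u (τ + x)) s)))) - d • u (τ + s))) s
    rw [hfun, hval]
    simp only [intervalIntegral.integral_comp_add_left, add_zero]
    rw [e1, e2, ← intervalIntegral.integral_add_adjacent_intervals iA iB, map_add, add_comm τ t,
      expL_add, add_assoc]
    congr 2
    have hl := ContinuousLinearMap.intervalIntegral_comp_comm
      (Matrix.toEuclideanLin (NormedSpace.exp (-(t • A)))).toContinuousLinearMap i2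
    simp only [LinearMap.coe_toContinuousLinearMap'] at hl
    rw [← hl]
    apply intervalIntegral.integral_congr
    intro s _
    simp only [hF, hg]
    rw [← expL_add]
    congr 5
    ring
end
end

section
/- Let r > 0, n ≥ 1, let A be a real n×n symmetric matrix satisfying ⟨A v, v⟩ ≥ λ₁‖v‖² for all v ∈ ℝⁿ, where λ₁ > 0, let d ≥ 0, let b : ℝⁿ → ℝⁿ be bounded with ‖b(w)‖ ≤ C_b for all w ∈ ℝⁿ, and let η : C([-r,0];ℝⁿ) → [0, r]. Let T > 0, φ ∈ C([-r,0];ℝⁿ), and let u : [-r,T] → ℝⁿ be a mild solution of u'(t) + A u(t) + d u(t) = b(u(t − η(u_t))) with initial condition φ. Then for all t ∈ [0,T]: ‖u(t)‖ ≤ e^{−(λ₁+d)t}·‖φ(0)‖ + C_b/(λ₁+d). In particular, the system is dissipative: every solution eventually enters the ball of radius C_b/(λ₁+d) + 1. -/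
noncomputable section

open Filter Topology in
/-- One-sided slope estimate for the norm of `S(h) y - h d y`. -/
lemma aux_slope {E : Type*} [NormedAddCommGroup E] [InnerProductSpace ℝ E] [CompleteSpace E]
    (M : E →L[ℝ] E) (lam d : ℝ) (hM : ∀ v, inner ℝ v (M v) ≤ -(lam * ‖v‖ ^ 2)) (y : E)
    (ε : ℝ) (hε : 0 < ε) :
    ∀ᶠ h in 𝓝[>] (0:ℝ), ‖NormedSpace.exp (h • M) y - (h * d) • y‖
      ≤ ‖y‖ + h * (-(lam + d) * ‖y‖ + ε) := by
  by_cases hy : y = 0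
  · filter_upwards [self_mem_nhdsWithin] with h hh
    have hh : 0 < h := hh
    subst hy
    simp
    positivity
  have hy' : 0 < ‖y‖ := norm_pos_iff.mpr hy
  have h1 : HasDerivAt (fun h : ℝ => NormedSpace.exp (h • M)) M 0 := by
    have := hasDerivAt_exp_smul_const (𝕂 := ℝ) M (0:ℝ)
    simpa using this
  have h2 : HasDerivAt (fun h : ℝ => NormedSpace.exp (h • M) y) (M y) 0 := by
    have := h1.clm_apply (hasDerivAt_const (0:ℝ) y)
    simpa using this
  have h3 : HasDerivAt (fun h : ℝ => (h * d) • y) (d • y) 0 := by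
    have := ((hasDerivAt_id (0:ℝ)).mul_const d).smul_const y
    simpa using this
  have h4 := (h2.sub h3).norm_sq
  have h5 := h4.sqrt (by simp [hy])
  have h6 := h5.tendsto_slope_zero_right
  have hval : (2 * inner ℝ y (M y - d • y)) / (2 * ‖y‖) < -(lam + d) * ‖y‖ + ε := by
    rw [div_lt_iff₀ (by positivity), inner_sub_right, inner_smul_right, real_inner_self_eq_norm_sq]
    nlinarith [hM y, mul_pos hε hy']
  simp only [Pi.pow_apply, Pi.sub_apply, Real.sqrt_sq (norm_nonneg _), zero_smul, zero_mul, sub_zero,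
    NormedSpace.exp_zero, ContinuousLinearMap.one_apply, zero_add] at h6
  filter_upwards [h6.eventually_lt_const hval, self_mem_nhdsWithin] with h hh hpos
  have hpos : 0 < h := hpos
  rw [smul_eq_mul, inv_mul_lt_iff₀ hpos] at hh
  linarith

open Filter Topology MeasureTheory in
lemma aux_main {E : Type*} [NormedAddCommGroup E] [InnerProductSpace ℝ E] [CompleteSpace E]
    (M : E →L[ℝ] E) (lam d : ℝ) (hld : 0 < lam + d) (hd : 0 ≤ d)
    (hM : ∀ v, inner ℝ v (M v) ≤ -(lam * ‖v‖ ^ 2))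
    (B u : ℝ → E) (Cb : ℝ) (hCb : 0 ≤ Cb) (hB : ∀ s, ‖B s‖ ≤ Cb) (y0 : E) (T : ℝ)
    (hu : ContinuousOn u (Set.Icc 0 T))
    (hi : ∀ t ∈ Set.Icc (0:ℝ) T, IntervalIntegrable
      (fun s => NormedSpace.exp ((t - s) • M) (B s - d • u s)) volume 0 t)
    (he : ∀ t ∈ Set.Icc (0:ℝ) T, u t = NormedSpace.exp (t • M) y0 +
      ∫ s in (0:ℝ)..t, NormedSpace.exp ((t - s) • M) (B s - d • u s)) :
    ∀ t ∈ Set.Icc (0:ℝ) T, ‖u t‖ ≤ Real.exp (-(lam + d) * t) * ‖y0‖ + Cb / (lam + d) := by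
  intro t ht
  have h0T : (0:ℝ) ∈ Set.Icc 0 T := ⟨le_rfl, ht.1.trans ht.2⟩
  have hu0 : u 0 = y0 := by simpa using he 0 h0T
  have hadd : ∀ a c : ℝ, NormedSpace.exp ((a + c) • M)
      = NormedSpace.exp (a • M) * NormedSpace.exp (c • M) := by
    intro a c
    rw [add_smul]
    letI : NormedAlgebra ℚ (E →L[ℝ] E) := NormedAlgebra.restrictScalars ℚ ℝ (E →L[ℝ] E)
    exact NormedSpace.exp_add_of_commute (((Commute.refl M).smul_left a).smul_right c)
  have key : ∀ x ∈ Set.Ico (0:ℝ) T, ∀ ρ, (-(lam + d) * ‖u x‖ + Cb) < ρ →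
      ∃ᶠ z in 𝓝[>] x, (z - x)⁻¹ * (‖u z‖ - ‖u x‖) < ρ := by
    intro x hx ρ hρ
    apply Eventually.frequently
    obtain ⟨ε, hε, hερ⟩ : ∃ ε > 0, -(lam + d) * ‖u x‖ + Cb + 2 * ε < ρ :=
      ⟨(ρ - (-(lam + d) * ‖u x‖ + Cb)) / 3, by linarith, by linarith⟩
    -- slope part
    have hs := aux_slope M lam d hM (u x) ε hε
    have hmap : Tendsto (fun z => z - x) (𝓝[>] x) (𝓝[>] (0:ℝ)) := by
      apply tendsto_nhdsWithin_of_tendsto_nhds_of_eventually_within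
      · have : Tendsto (fun z => z - x) (𝓝 x) (𝓝 (x - x)) := by
          exact (continuous_id.sub continuous_const).tendsto x
        rw [sub_self] at this
        exact this.mono_left nhdsWithin_le_nhds
      · filter_upwards [self_mem_nhdsWithin] with z hz
        exact Set.mem_Ioi.mpr (sub_pos.mpr (Set.mem_Ioi.mp hz))
    have hs' := hmap.eventually hs
    -- choice of small constants
    set K := Cb + d * (‖u x‖ + 1) + 1 with hK
    have hKpos : 0 < K := by positivity
    obtain ⟨κ, hκ, hκ1, hκ2⟩ : ∃ κ > 0, κ ≤ 1 ∧ κ * K + d * κ ≤ ε := by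
      refine ⟨min 1 (ε / (K + d)), by positivity, min_le_left _ _, ?_⟩
      rw [mul_comm d, ← mul_add]
      have := min_le_right 1 (ε / (K + d))
      rwa [le_div_iff₀ (by positivity)] at this
    have hc1 : ∀ᶠ h in 𝓝 (0:ℝ), ‖NormedSpace.exp (h • M) - 1‖ < κ := by
      have hct : Tendsto (fun h : ℝ => ‖NormedSpace.exp (h • M) - 1‖) (𝓝 0) (𝓝 0) := by
        have h1 := (hasDerivAt_exp_smul_const (𝕂 := ℝ) M (0:ℝ)).continuousAt
        have h2 := (h1.sub (continuousAt_const (y := (1 : E →L[ℝ] E)))).norm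
        simpa [ContinuousAt] using h2
      exact hct.eventually_lt_const hκ
    obtain ⟨δ1, hδ1, hc1⟩ := Metric.eventually_nhds_iff.mp hc1
    obtain ⟨δ2, hδ2, hc2⟩ := Metric.continuousOn_iff.mp hu x ⟨hx.1, hx.2.le⟩ κ hκ
    have hz1 : ∀ᶠ z in 𝓝[>] x, z ∈ Set.Ioo x (min T (x + min δ1 δ2)) :=
      Ioo_mem_nhdsGT (lt_min hx.2 (by have : 0 < min δ1 δ2 := by positivity
                                      linarith))
    filter_upwards [hs', hz1] with z hsz hz
    have hzx : 0 < z - x := sub_pos.mpr hz.1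
    have hzT : z < T := hz.2.trans_le (min_le_left _ _)
    have hzd : z < x + min δ1 δ2 := hz.2.trans_le (min_le_right _ _)
    have hzd1 : z - x < δ1 := by linarith [min_le_left δ1 δ2]
    have hzd2 : z - x < δ2 := by linarith [min_le_right δ1 δ2]
    have hz0 : 0 ≤ z := hx.1.trans hz.1.le
    have hzi := hi z ⟨hz0, hzT.le⟩
    have hi1 : IntervalIntegrable
        (fun s => NormedSpace.exp ((z - s) • M) (B s - d • u s)) volume 0 x := by
      apply hzi.mono_set
      rw [Set.uIcc_of_le hx.1, Set.uIcc_of_le hz0]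
      exact Set.Icc_subset_Icc_right hz.1.le
    have hi2 : IntervalIntegrable
        (fun s => NormedSpace.exp ((z - s) • M) (B s - d • u s)) volume x z := by
      apply hzi.mono_set
      rw [Set.uIcc_of_le hz.1.le, Set.uIcc_of_le hz0]
      exact Set.Icc_subset_Icc_left hx.1
    have hsplit := intervalIntegral.integral_add_adjacent_intervals hi1 hi2
    have hfirst : ∫ s in (0:ℝ)..x, NormedSpace.exp ((z - s) • M) (B s - d • u s)
        = NormedSpace.exp ((z - x) • M)
          (∫ s in (0:ℝ)..x, NormedSpace.exp ((x - s) • M) (B s - d • u s)) := by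
      rw [← ContinuousLinearMap.intervalIntegral_comp_comm _ (hi x ⟨hx.1, hx.2.le⟩)]
      congr 1
      ext s
      rw [show z - s = (z - x) + (x - s) by ring, hadd]
      rfl
    have hstart : NormedSpace.exp (z • M) y0
        = NormedSpace.exp ((z - x) • M) (NormedSpace.exp (x • M) y0) := by
      conv_lhs => rw [show z = (z - x) + x by ring, hadd]
      rfl
    have hR : ∫ s in x..z, (NormedSpace.exp ((z - s) • M) (B s - d • u s) + d • u x)
        = (∫ s in x..z, NormedSpace.exp ((z - s) • M) (B s - d • u s))
          + ((z - x) * d) • u x := by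
      rw [intervalIntegral.integral_add hi2 intervalIntegrable_const,
        intervalIntegral.integral_const, smul_smul]
    have huz : u z = (NormedSpace.exp ((z - x) • M) (u x) - ((z - x) * d) • u x)
        + ∫ s in x..z, (NormedSpace.exp ((z - s) • M) (B s - d • u s) + d • u x) := by
      rw [hR, he z ⟨hz0, hzT.le⟩, ← hsplit, hfirst, hstart]
      conv_rhs => rw [he x ⟨hx.1, hx.2.le⟩]
      rw [map_add]
      abel
    have hRb : ‖∫ s in x..z, (NormedSpace.exp ((z - s) • M) (B s - d • u s) + d • u x)‖
        ≤ (Cb + ε) * |z - x| := by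
      apply intervalIntegral.norm_integral_le_of_norm_le_const
      intro s hs
      rw [Set.uIoc_of_le hz.1.le] at hs
      have ha : ‖NormedSpace.exp ((z - s) • M) - 1‖ < κ := by
        apply hc1
        rw [Real.dist_eq, sub_zero, abs_of_nonneg (by linarith [hs.2])]
        linarith [hs.1]
      have hb : ‖u s - u x‖ < κ := by
        rw [← dist_eq_norm]
        apply hc2 s ⟨hx.1.trans hs.1.le, hs.2.trans hzT.le⟩
        rw [Real.dist_eq, abs_of_nonneg (by linarith [hs.1])]
        linarith [hs.2]
      have hus : ‖u s‖ ≤ ‖u x‖ + 1 := by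
        have := norm_le_norm_add_norm_sub' (u s) (u x)
        linarith
      have hg : ‖B s - d • u s‖ ≤ K := by
        calc ‖B s - d • u s‖ ≤ ‖B s‖ + ‖d • u s‖ := norm_sub_le _ _
          _ = ‖B s‖ + d * ‖u s‖ := by rw [norm_smul, Real.norm_of_nonneg hd]
          _ ≤ Cb + d * (‖u x‖ + 1) := by gcongr; exact hB s
          _ ≤ K := by linarith
      have hdec : NormedSpace.exp ((z - s) • M) (B s - d • u s) + d • u x
          = B s + (NormedSpace.exp ((z - s) • M) - 1) (B s - d • u s) - d • (u s - u x) := by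
        rw [ContinuousLinearMap.sub_apply, ContinuousLinearMap.one_apply, smul_sub]
        abel
      rw [hdec]
      calc _ ≤ ‖B s‖ + ‖(NormedSpace.exp ((z - s) • M) - 1) (B s - d • u s)‖
            + ‖d • (u s - u x)‖ := (norm_sub_le _ _).trans (by gcongr; exact norm_add_le _ _)
        _ ≤ Cb + κ * K + d * κ := by
            gcongr
            · exact hB s
            · exact (ContinuousLinearMap.le_opNorm _ _).trans (by gcongr)
            · rw [norm_smul, Real.norm_of_nonneg hd]; gcongr
        _ ≤ Cb + ε := by linarith
    rw [abs_of_pos hzx] at hRb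
    have hfin : ‖u z‖ ≤ ‖u x‖ + (z - x) * (-(lam + d) * ‖u x‖ + ε) + (Cb + ε) * (z - x) := by
      conv_lhs => rw [huz]
      exact (norm_add_le _ _).trans (add_le_add hsz hRb)
    rw [inv_mul_lt_iff₀ hzx]
    nlinarith
  have hg := le_gronwallBound_of_liminf_deriv_right_le (f := fun t => ‖u t‖)
    (f' := fun x => -(lam + d) * ‖u x‖ + Cb) (δ := ‖y0‖) (K := -(lam + d)) (ε := Cb)
    hu.norm key (by simp [hu0]) (fun x _ => le_rfl) t ht
  rw [gronwallBound_of_K_ne_0 (by linarith)] at hg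
  refine hg.trans ?_
  simp only [sub_zero]
  have h1 : Cb / -(lam + d) * (Real.exp (-(lam + d) * t) - 1)
      = Cb / (lam + d) - Cb / (lam + d) * Real.exp (-(lam + d) * t) := by
    rw [div_neg]; ring
  rw [h1, mul_comm]
  have : 0 ≤ Cb / (lam + d) * Real.exp (-(lam + d) * t) := by positivity
  linarith

/-- dissipativity estimate (Step 3 of the proof of Theorem 2, case δ = 0):
if `⟨Av,v⟩ ≥ λ₁‖v‖²` and `‖b‖ ≤ C_b`, then any mild solution satisfies
`‖u(t)‖ ≤ e^{−(λ₁+d)t}‖φ(0)‖ + C_b/(λ₁+d)`. -/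
theorem mild_solution_dissipative
    {n : ℕ} (hn : 1 ≤ n) (r : ℝ) (hr : 0 < r)
    (A : Matrix (Fin n) (Fin n) ℝ) (hAs : A.IsSymm)
    (lam : ℝ) (hlam : 0 < lam)
    (hA : ∀ v : EuclideanSpace ℝ (Fin n), lam * ‖v‖ ^ 2 ≤ (inner ℝ (Matrix.toEuclideanLin A v) v : ℝ))
    (d : ℝ) (hd : 0 ≤ d)
    (b : EuclideanSpace ℝ (Fin n) → EuclideanSpace ℝ (Fin n))
    (Cb : ℝ) (hCb : 0 ≤ Cb) (hb : ∀ w, ‖b w‖ ≤ Cb)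
    (η : C(Set.Icc (-r) (0:ℝ), EuclideanSpace ℝ (Fin n)) → ℝ)
    (hηrange : ∀ φ, η φ ∈ Set.Icc (0:ℝ) r)
    (T : ℝ) (hT : 0 < T)
    (φ : C(Set.Icc (-r) (0:ℝ), EuclideanSpace ℝ (Fin n)))
    (u : ℝ → EuclideanSpace ℝ (Fin n))
    (hu : IsMildSolution r hr T d A b η φ u) :
    ∀ t ∈ Set.Icc (0:ℝ) T,
      ‖u t‖ ≤ Real.exp (-(lam + d) * t) * ‖φ ⟨0, Set.right_mem_Icc.mpr (by linarith)⟩‖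
        + Cb / (lam + d) := by
  obtain ⟨hc, hφ, hm⟩ := hu
  set P := Matrix.toEuclideanCLM (n := Fin n) (𝕜 := ℝ) with hP
  have hexp : ∀ (τ : ℝ) (v : EuclideanSpace ℝ (Fin n)),
      Matrix.toEuclideanLin (NormedSpace.exp (-(τ • A))) v
        = NormedSpace.exp (τ • (-(P A))) v := by
    intro τ v
    have hcont : Continuous P := LinearMap.continuous_of_finiteDimensional
      (P.toAlgEquiv.toLinearMap)
    have h1 : P (NormedSpace.exp (-(τ • A))) = NormedSpace.exp (P (-(τ • A))) := by
      open scoped Matrix.Norms.Operator in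
      exact NormedSpace.map_exp P hcont _
    have h2 : P (-(τ • A)) = τ • (-(P A)) := by
      rw [map_neg, map_smul, smul_neg]
    rw [← h2, ← h1]
    rfl
  simp only [hexp] at hm
  refine aux_main (-(P A)) lam d (by linarith) hd ?_
    (fun s => b (u (s - η (histSeg r u s)))) u Cb hCb (fun s => hb _) _ T
    (hc.mono (Set.Icc_subset_Icc_left (by linarith)))
    (fun t ht => (hm t ht).1) (fun t ht => (hm t ht).2)
  intro v
  have := hA v
  rw [real_inner_comm] at this
  rw [ContinuousLinearMap.neg_apply, inner_neg_right]
  exact neg_le_neg this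
end
end

section
/- Let δ ∈ [0, 1/2), let 0 < t₁ ≤ t₂, let (λ_k)_{k∈ℕ} be a sequence of positive real numbers, and let (v_k)_{k∈ℕ} be a real sequence with Σ_k v_k² < ∞. Then Σ_k (e^{−λ_k t₁} − e^{−λ_k t₂})² · λ_k^{2δ} · v_k² ≤ D_δ² · t₁^{−(2δ+1)} · (t₂ − t₁) · Σ_k v_k², where D_δ = e^{−(δ+1/2)}·(δ+1/2)^{δ+1/2}. Equivalently, in square-root form: (Σ_k (e^{−λ_k t₁} − e^{−λ_k t₂})² λ_k^{2δ} v_k²)^{1/2} ≤ D_δ · t₁^{−(δ+1/2)} · (t₂−t₁)^{1/2} · (Σ_k v_k²)^{1/2}. -/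
theorem aux_exp_rpow (s x : ℝ) (hs : 0 < s) (hx : 0 < x) :
    Real.exp (-x) * x ^ s ≤ Real.exp (-s) * s ^ s := by
  have h1 : x / s ≤ Real.exp (x / s - 1) := by
    have := Real.add_one_le_exp (x / s - 1)
    linarith
  have h2 : (x / s) ^ s ≤ Real.exp (x / s - 1) ^ s :=
    Real.rpow_le_rpow (by positivity) h1 hs.le
  rw [← Real.exp_mul, Real.div_rpow hx.le hs.le] at h2
  have h3 : (x / s - 1) * s = x - s := by field_simp
  have hp : 0 < s ^ s := by positivity
  rw [h3, div_le_iff₀ hp] at h2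
  calc Real.exp (-x) * x ^ s ≤ Real.exp (-x) * (Real.exp (x - s) * s ^ s) := by gcongr
    _ = Real.exp (-s) * s ^ s := by
      rw [← mul_assoc, ← Real.exp_add]
      congr 2
      ring

theorem aux_term (δ t₁ t₂ l : ℝ) (hδ0 : 0 ≤ δ) (ht₁ : 0 < t₁) (ht : t₁ ≤ t₂) (hl : 0 < l) :
    (Real.exp (-(l * t₁)) - Real.exp (-(l * t₂))) ^ 2 * l ^ (2 * δ) ≤
      (Real.exp (-(δ + 1 / 2)) * (δ + 1 / 2) ^ (δ + 1 / 2)) ^ 2 *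
        t₁ ^ (-(2 * δ + 1)) * (t₂ - t₁) := by
  have hk := aux_exp_rpow (δ + 1 / 2) (l * t₁) (by linarith) (by positivity)
  have hd : 0 ≤ t₂ - t₁ := by linarith
  have e2 : Real.exp (-(l * t₂)) = Real.exp (-(l * t₁)) * Real.exp (-(l * (t₂ - t₁))) := by
    rw [← Real.exp_add]
    congr 1
    ring
  have hy0 : 0 ≤ l * (t₂ - t₁) := by positivity
  have hy1 : Real.exp (-(l * (t₂ - t₁))) ≤ 1 := Real.exp_le_one_iff.2 (by linarith)
  have hy2 := Real.add_one_le_exp (-(l * (t₂ - t₁)))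
  have hy3 := Real.exp_pos (-(l * (t₂ - t₁)))
  have hsq : (1 - Real.exp (-(l * (t₂ - t₁)))) ^ 2 ≤ l * (t₂ - t₁) := by nlinarith
  have hl2 : l ^ (2 * δ) * l = (l ^ (δ + 1 / 2)) ^ 2 := by
    rw [← Real.rpow_natCast, ← Real.rpow_mul hl.le, ← Real.rpow_add_one hl.ne']
    congr 1
    push_cast
    ring
  have ht2 : t₁ ^ (-(2 * δ + 1)) * (t₁ ^ (δ + 1 / 2)) ^ 2 = 1 := by
    rw [← Real.rpow_natCast, ← Real.rpow_mul ht₁.le, ← Real.rpow_add ht₁]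
    convert Real.rpow_zero t₁ using 2
    push_cast
    ring
  calc _ = Real.exp (-(l * t₁)) ^ 2 * l ^ (2 * δ) * (1 - Real.exp (-(l * (t₂ - t₁)))) ^ 2 := by
        rw [e2]; ring
    _ ≤ Real.exp (-(l * t₁)) ^ 2 * l ^ (2 * δ) * (l * (t₂ - t₁)) := by gcongr
    _ = Real.exp (-(l * t₁)) ^ 2 * (l ^ (2 * δ) * l) * (t₂ - t₁) *
          (t₁ ^ (-(2 * δ + 1)) * (t₁ ^ (δ + 1 / 2)) ^ 2) := by rw [ht2]; ring
    _ = (Real.exp (-(l * t₁)) * (l * t₁) ^ (δ + 1 / 2)) ^ 2 *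
        t₁ ^ (-(2 * δ + 1)) * (t₂ - t₁) := by
        rw [hl2, Real.mul_rpow hl.le ht₁.le]; ring
    _ ≤ _ := by gcongr

/-- the spectral series estimate (sdd8-5-5) of the paper:
`Σ_k (e^{−λ_k t₁} − e^{−λ_k t₂})² λ_k^{2δ} v_k² ≤ D_δ² t₁^{−(2δ+1)} (t₂−t₁) Σ_k v_k²`,
where `D_δ = e^{−(δ+1/2)} (δ+1/2)^{δ+1/2}`, together with its square-root form. -/
theorem spectral_series_estimate_sqrt_form
    (δ t₁ t₂ : ℝ) (hδ0 : 0 ≤ δ) (hδ : δ < 1 / 2) (ht₁ : 0 < t₁) (ht : t₁ ≤ t₂)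
    (lam : ℕ → ℝ) (hlam : ∀ k, 0 < lam k)
    (v : ℕ → ℝ) (hv : Summable fun k => v k ^ 2) :
    (∑' k : ℕ, (Real.exp (-(lam k * t₁)) - Real.exp (-(lam k * t₂))) ^ 2 *
        lam k ^ (2 * δ) * v k ^ 2) ≤
      (Real.exp (-(δ + 1 / 2)) * (δ + 1 / 2) ^ (δ + 1 / 2)) ^ 2 *
        t₁ ^ (-(2 * δ + 1)) * (t₂ - t₁) * ∑' k : ℕ, v k ^ 2 ∧
    Real.sqrt (∑' k : ℕ, (Real.exp (-(lam k * t₁)) - Real.exp (-(lam k * t₂))) ^ 2 *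
        lam k ^ (2 * δ) * v k ^ 2) ≤
      Real.exp (-(δ + 1 / 2)) * (δ + 1 / 2) ^ (δ + 1 / 2) *
        t₁ ^ (-(δ + 1 / 2)) * Real.sqrt (t₂ - t₁) * Real.sqrt (∑' k : ℕ, v k ^ 2) := by
  have hd : 0 ≤ t₂ - t₁ := by linarith
  have hs : 0 < δ + 1 / 2 := by linarith
  have hterm : ∀ k, (Real.exp (-(lam k * t₁)) - Real.exp (-(lam k * t₂))) ^ 2 *
        lam k ^ (2 * δ) * v k ^ 2 ≤
      (Real.exp (-(δ + 1 / 2)) * (δ + 1 / 2) ^ (δ + 1 / 2)) ^ 2 *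
        t₁ ^ (-(2 * δ + 1)) * (t₂ - t₁) * v k ^ 2 := fun k =>
    mul_le_mul_of_nonneg_right (aux_term δ t₁ t₂ (lam k) hδ0 ht₁ ht (hlam k)) (sq_nonneg _)
  have hsum := hv.mul_left ((Real.exp (-(δ + 1 / 2)) * (δ + 1 / 2) ^ (δ + 1 / 2)) ^ 2 *
        t₁ ^ (-(2 * δ + 1)) * (t₂ - t₁))
  have hsum' := Summable.of_nonneg_of_le (fun k => by have := hlam k; positivity) hterm hsum
  have main := hsum'.tsum_le_tsum hterm hsum
  rw [tsum_mul_left] at main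
  refine ⟨main, ?_⟩
  have hv0 : 0 ≤ ∑' k : ℕ, v k ^ 2 := tsum_nonneg fun k => sq_nonneg _
  refine Real.sqrt_le_iff.2 ⟨by positivity, main.trans_eq ?_⟩
  have ht2 : t₁ ^ (-(2 * δ + 1)) = (t₁ ^ (-(δ + 1 / 2))) ^ 2 := by
    rw [← Real.rpow_natCast, ← Real.rpow_mul ht₁.le]
    congr 1
    push_cast
    ring
  rw [ht2, mul_pow _ (Real.sqrt (∑' k : ℕ, v k ^ 2)), mul_pow _ (Real.sqrt (t₂ - t₁)),
    Real.sq_sqrt hv0, Real.sq_sqrt hd, mul_pow _ (t₁ ^ (-(δ + 1 / 2)))]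
end

section
/- Let n ≥ 1, let A be a real n×n symmetric positive definite matrix, let v ∈ ℝⁿ, and let 0 < t₁ ≤ t₂. Then ‖exp(−t₁ A)·v − exp(−t₂ A)·v‖ ≤ (2e·t₁)^{−1/2} · (t₂ − t₁)^{1/2} · ‖v‖, where exp denotes the matrix exponential and ‖·‖ the Euclidean norm. -/
noncomputable section

lemma scalar_aux (l t s : ℝ) (hl : 0 < l) (ht : 0 < t) (hs : 0 ≤ s) :
    |Real.exp (-(t * l)) - Real.exp (-((t + s) * l))| ≤
      (2 * Real.exp 1 * t) ^ (-(1 / 2 : ℝ)) * s ^ (1 / 2 : ℝ) := by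
  have he := Real.exp_pos 1
  rw [Real.rpow_neg (by positivity), ← Real.sqrt_eq_rpow, ← Real.sqrt_eq_rpow,
    ← Real.sqrt_inv, ← Real.sqrt_mul (by positivity)]
  apply Real.abs_le_sqrt
  have h0 : Real.exp (-((t + s) * l)) = Real.exp (-(t * l)) * Real.exp (-(s * l)) := by
    rw [← Real.exp_add]; congr 1; ring
  have h1 : Real.exp (-(s * l)) ≤ 1 := Real.exp_le_one_iff.2 (by nlinarith)
  have h2 := Real.exp_pos (-(s * l))
  have h3 := Real.add_one_le_exp (-(s * l))
  have h4 : (1 - Real.exp (-(s * l))) ^ 2 ≤ s * l := by nlinarith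
  have h5 : 2 * t * l * Real.exp 1 * Real.exp (-(t * l)) ^ 2 ≤ 1 := by
    have h6 := Real.add_one_le_exp (2 * t * l - 1)
    have h7 : Real.exp (2 * t * l - 1) * (Real.exp 1 * Real.exp (-(t * l)) ^ 2) = 1 := by
      rw [sq, ← Real.exp_add, ← Real.exp_add, ← Real.exp_add, Real.exp_eq_one_iff]; ring
    have h8 : 0 < Real.exp 1 * Real.exp (-(t * l)) ^ 2 := by positivity
    nlinarith
  rw [h0, inv_mul_eq_div, le_div_iff₀ (by positivity)]
  calc _ = (1 - Real.exp (-(s * l))) ^ 2 *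
        (2 * Real.exp 1 * t * Real.exp (-(t * l)) ^ 2) := by ring
    _ ≤ s * l * (2 * Real.exp 1 * t * Real.exp (-(t * l)) ^ 2) := by gcongr
    _ = s * (2 * t * l * Real.exp 1 * Real.exp (-(t * l)) ^ 2) := by ring
    _ ≤ s * 1 := by gcongr
    _ = s := by ring

lemma exp_aux {n : ℕ} (A : Matrix (Fin n) (Fin n) ℝ) (hA : A.IsHermitian) (t : ℝ) :
    NormedSpace.exp (-(t • A)) = (hA.eigenvectorUnitary : Matrix (Fin n) (Fin n) ℝ) *
      (Matrix.diagonal fun i => Real.exp (-(t * hA.eigenvalues i))) *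
      ((star hA.eigenvectorUnitary : Matrix.unitaryGroup (Fin n) ℝ) :
        Matrix (Fin n) (Fin n) ℝ) := by
  have h := hA.spectral_theorem
  rw [Unitary.conjStarAlgAut_apply] at h
  have h2 := Matrix.exp_units_conj (Unitary.toUnits hA.eigenvectorUnitary)
    (Matrix.diagonal fun i => (-(t * hA.eigenvalues i)))
  rw [Matrix.exp_diagonal] at h2
  have h3 : -(t • A) = (hA.eigenvectorUnitary : Matrix (Fin n) (Fin n) ℝ) *
      (Matrix.diagonal fun i => (-(t * hA.eigenvalues i))) *
      ((star hA.eigenvectorUnitary : Matrix.unitaryGroup (Fin n) ℝ) :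
        Matrix (Fin n) (Fin n) ℝ) := by
    have h4 : (Matrix.diagonal fun i => (-(t * hA.eigenvalues i))) =
        -(t • Matrix.diagonal ((RCLike.ofReal : ℝ → ℝ) ∘ hA.eigenvalues)) := by
      ext i j
      by_cases hij : i = j
      · subst hij; simp
      · simp [hij]
    conv_lhs => rw [h]
    rw [h4]
    simp
  rw [h3]
  refine h2.trans ?_
  have h5 : NormedSpace.exp (fun i => (-(t * hA.eigenvalues i))) =
      fun i => Real.exp (-(t * hA.eigenvalues i)) := by
    ext i
    rw [Pi.coe_exp, Real.exp_eq_exp_ℝ]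
  rw [h5]
  rfl

open scoped Matrix.Norms.L2Operator in
lemma norm_aux {n : ℕ} (A : Matrix (Fin n) (Fin n) ℝ) (hA : A.PosDef)
    (v : EuclideanSpace ℝ (Fin n)) (t₁ t₂ : ℝ) (ht₁ : 0 < t₁) (ht : t₁ ≤ t₂) :
    ‖Matrix.toEuclideanLin (NormedSpace.exp (-(t₁ • A)) - NormedSpace.exp (-(t₂ • A))) v‖ ≤
      (2 * Real.exp 1 * t₁) ^ (-(1 / 2 : ℝ)) * (t₂ - t₁) ^ ((1 / 2 : ℝ)) * ‖v‖ := by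
  have hs : 0 ≤ t₂ - t₁ := by linarith
  refine (Matrix.l2_opNorm_mulVec _ v).trans ?_
  gcongr
  rw [exp_aux A hA.1, exp_aux A hA.1, ← sub_mul, ← mul_sub, CStarRing.norm_mul_coe_unitary,
    CStarRing.norm_coe_unitary_mul, Matrix.diagonal_sub, Matrix.l2_opNorm_diagonal,
    pi_norm_le_iff_of_nonneg (by positivity)]
  intro i
  have := scalar_aux (hA.1.eigenvalues i) t₁ (t₂ - t₁) (hA.eigenvalues_pos i) ht₁ hs
  rwa [add_sub_cancel] at this

/-- the matrix form of estimate (sdd8-5-5) with δ = 0: for a symmetric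
positive definite matrix `A` and `0 < t₁ ≤ t₂`,
`‖e^{−t₁A}v − e^{−t₂A}v‖ ≤ (2e t₁)^{−1/2} (t₂−t₁)^{1/2} ‖v‖`. -/
theorem matrix_semigroup_holder_estimate
    {n : ℕ} (hn : 1 ≤ n)
    (A : Matrix (Fin n) (Fin n) ℝ) (hA : A.PosDef) (hAs : A.IsSymm)
    (v : EuclideanSpace ℝ (Fin n)) (t₁ t₂ : ℝ) (ht₁ : 0 < t₁) (ht : t₁ ≤ t₂) :
    ‖Matrix.toEuclideanLin (NormedSpace.exp (-(t₁ • A))) v -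
        Matrix.toEuclideanLin (NormedSpace.exp (-(t₂ • A))) v‖ ≤
      (2 * Real.exp 1 * t₁) ^ (-(1 / 2 : ℝ)) * (t₂ - t₁) ^ ((1 / 2 : ℝ)) * ‖v‖ := by
  rw [← LinearMap.sub_apply, ← map_sub]
  exact norm_aux A hA v t₁ t₂ ht₁ ht
end
end

section
/- Let r > 0, n ≥ 1, let A be a real n×n symmetric positive definite matrix, let d ≥ 0, let b : ℝⁿ → ℝⁿ, let η : C([-r,0];ℝⁿ) → [0, r], let T > 0, φ ∈ C([-r,0];ℝⁿ), and let u : [-r,T] → ℝⁿ be a mild solution of u'(t) + A u(t) + d u(t) = b(u(t − η(u_t))) with initial condition φ. Suppose M ≥ 0 satisfies ‖b(u(s − η(u_s))) − d·u(s)‖ ≤ M for all s ∈ [0,T]. Then for all 0 < t₁ ≤ t₂ ≤ T: ‖u(t₁) − u(t₂)‖ ≤ (t₂ − t₁)^{1/2} · [ (2e·t₁)^{−1/2}·‖φ(0)‖ + 2·(2e)^{−1/2}·t₁^{1/2}·M + (t₂ − t₁)^{1/2}·M ]. In particular, on every interval [a, T] with a > 0, u is Hölder continuous with exponent 1/2 and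 a constant depending only on a, T, ‖φ(0)‖ and M. -/
noncomputable section

theorem aux_eig {n : ℕ} (A : Matrix (Fin n) (Fin n) ℝ) (hA : A.IsHermitian) (t : ℝ) (j : Fin n) :
    Matrix.toEuclideanLin (NormedSpace.exp (-(t • A))) (hA.eigenvectorBasis j) =
      Real.exp (-(t * hA.eigenvalues j)) • hA.eigenvectorBasis j := by
  have h1 : -(t • A) = ((Unitary.toUnits hA.eigenvectorUnitary : (Matrix (Fin n) (Fin n) ℝ)ˣ) : Matrix (Fin n) (Fin n) ℝ) *
      Matrix.diagonal (fun i => -(t * hA.eigenvalues i)) *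
      (((Unitary.toUnits hA.eigenvectorUnitary)⁻¹ : (Matrix (Fin n) (Fin n) ℝ)ˣ) : Matrix (Fin n) (Fin n) ℝ) := by
    conv_lhs => rw [hA.spectral_theorem, Unitary.conjStarAlgAut_apply]
    have : Matrix.diagonal (fun i => -(t * hA.eigenvalues i)) =
        -(t • Matrix.diagonal (RCLike.ofReal ∘ hA.eigenvalues : Fin n → ℝ)) := by
      ext a b
      by_cases h : a = b
      · subst h; simp
      · simp [h]
    rw [this]
    simp [← Unitary.coe_star]
  rw [h1, Matrix.exp_units_conj, Matrix.exp_diagonal, Matrix.toEuclideanLin_apply]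
  have h2 : (((Unitary.toUnits hA.eigenvectorUnitary)⁻¹ : (Matrix (Fin n) (Fin n) ℝ)ˣ) : Matrix (Fin n) (Fin n) ℝ) = star (hA.eigenvectorUnitary : Matrix (Fin n) (Fin n) ℝ) := rfl
  have h3 : ((Unitary.toUnits hA.eigenvectorUnitary : (Matrix (Fin n) (Fin n) ℝ)ˣ) : Matrix (Fin n) (Fin n) ℝ) = (hA.eigenvectorUnitary : Matrix (Fin n) (Fin n) ℝ) := rfl
  rw [h2, h3, ← Matrix.mulVec_mulVec, hA.star_eigenvectorUnitary_mulVec, ← Matrix.mulVec_mulVec,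
    Matrix.diagonal_mulVec_single, mul_one]
  have h4 : NormedSpace.exp (fun i => -(t * hA.eigenvalues i)) j =
      Real.exp (-(t * hA.eigenvalues j)) := by
    rw [Pi.coe_exp, ← Real.exp_eq_exp_ℝ]
  have h5 : (Pi.single j (Real.exp (-(t * hA.eigenvalues j))) : Fin n → ℝ) =
      Real.exp (-(t * hA.eigenvalues j)) • Pi.single j 1 := by
    rw [← Pi.single_smul, smul_eq_mul, mul_one]
  rw [h4, h5, Matrix.mulVec_smul, hA.eigenvectorUnitary_mulVec]
  rfl

theorem aux_norm {n : ℕ} (v : OrthonormalBasis (Fin n) ℝ (EuclideanSpace ℝ (Fin n)))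
    (L : EuclideanSpace ℝ (Fin n) →ₗ[ℝ] EuclideanSpace ℝ (Fin n)) (c : Fin n → ℝ) (K : ℝ)
    (hK : 0 ≤ K) (hL : ∀ j, L (v j) = c j • v j) (hc : ∀ j, |c j| ≤ K)
    (x : EuclideanSpace ℝ (Fin n)) : ‖L x‖ ≤ K * ‖x‖ := by
  have h1 : ∀ i, v.repr (L x) i = c i * v.repr x i := by
    intro i
    conv_lhs => rw [← v.sum_repr x]
    simp only [map_sum, map_smul, hL]
    simp [v.repr_self, Pi.single_apply, mul_comm]
  rw [← v.repr.norm_map (L x), ← v.repr.norm_map x]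
  apply le_of_sq_le_sq _ (by positivity)
  rw [mul_pow, EuclideanSpace.norm_sq_eq, EuclideanSpace.norm_sq_eq, Finset.mul_sum]
  refine Finset.sum_le_sum fun i _ => ?_
  rw [h1, norm_mul, mul_pow]
  gcongr
  exact hc i

theorem aux_scalar {l t h : ℝ} (hl : 0 ≤ l) (ht : 0 < t) (hh : 0 ≤ h) :
    |Real.exp (-(t * l)) - Real.exp (-((t + h) * l))| ≤
      h ^ (1 / 2 : ℝ) * ((2 * Real.exp 1) ^ (-(1 / 2 : ℝ)) * t ^ (-(1 / 2 : ℝ))) := by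
  have e1 : Real.exp (-((t + h) * l)) = Real.exp (-(t * l)) * Real.exp (-(h * l)) := by
    rw [← Real.exp_add]; congr 1; ring
  have hE := Real.exp_pos 1
  rw [Real.rpow_neg (by positivity), Real.rpow_neg (by positivity), ← Real.sqrt_eq_rpow,
    ← Real.sqrt_eq_rpow, ← Real.sqrt_eq_rpow, ← mul_inv, ← Real.sqrt_mul (by positivity),
    ← Real.sqrt_inv, ← Real.sqrt_mul hh]
  apply Real.abs_le_sqrt
  have hx : 0 ≤ h * l := by positivity
  have a1 : 1 - h * l ≤ Real.exp (-(h * l)) := by linarith [Real.add_one_le_exp (-(h * l))]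
  have a2 : Real.exp (-(h * l)) ≤ 1 := Real.exp_le_one_iff.2 (by linarith)
  have a3 := Real.exp_pos (-(h * l))
  have a4 : (1 - Real.exp (-(h * l))) ^ 2 ≤ h * l := by nlinarith
  have b1 : 2 * t * l * (Real.exp (-(t * l))) ^ 2 * Real.exp 1 ≤ 1 := by
    have := Real.add_one_le_exp (2 * t * l - 1)
    have e2 : (Real.exp (-(t * l))) ^ 2 * Real.exp 1 * Real.exp (2 * t * l - 1) = 1 := by
      rw [← Real.exp_nat_mul, ← Real.exp_add, ← Real.exp_add]
      rw [← Real.exp_zero]; congr 1; push_cast; ring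
    calc _ = (Real.exp (-(t * l))) ^ 2 * Real.exp 1 * (2 * t * l) := by ring
      _ ≤ (Real.exp (-(t * l))) ^ 2 * Real.exp 1 * Real.exp (2 * t * l - 1) := by
        gcongr; linarith
      _ = 1 := e2
  calc _ = (Real.exp (-(t * l))) ^ 2 * (1 - Real.exp (-(h * l))) ^ 2 := by rw [e1]; ring
    _ ≤ (Real.exp (-(t * l))) ^ 2 * (h * l) := by gcongr
    _ = h * (l * (Real.exp (-(t * l))) ^ 2) := by ring
    _ ≤ _ := by
      gcongr
      rw [← one_div, le_div_iff₀ (by positivity)]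
      linarith

theorem aux_diff {n : ℕ} (A : Matrix (Fin n) (Fin n) ℝ) (hA : A.PosDef) {t t' : ℝ} (ht : 0 < t)
    (hh : t ≤ t') (x : EuclideanSpace ℝ (Fin n)) :
    ‖Matrix.toEuclideanLin (NormedSpace.exp (-(t • A))) x -
      Matrix.toEuclideanLin (NormedSpace.exp (-(t' • A))) x‖ ≤
      (t' - t) ^ (1 / 2 : ℝ) * ((2 * Real.exp 1) ^ (-(1 / 2 : ℝ)) * t ^ (-(1 / 2 : ℝ))) * ‖x‖ := by
  have h0 : 0 ≤ t' - t := by linarith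
  have := aux_norm hA.1.eigenvectorBasis (Matrix.toEuclideanLin (NormedSpace.exp (-(t • A))) -
      Matrix.toEuclideanLin (NormedSpace.exp (-(t' • A))))
    (fun j => Real.exp (-(t * hA.1.eigenvalues j)) - Real.exp (-(t' * hA.1.eigenvalues j)))
    ((t' - t) ^ (1 / 2 : ℝ) * ((2 * Real.exp 1) ^ (-(1 / 2 : ℝ)) * t ^ (-(1 / 2 : ℝ))))
    (by positivity) (fun j => by rw [LinearMap.sub_apply, aux_eig, aux_eig, sub_smul])
    (fun j => by
      have := aux_scalar (hA.eigenvalues_pos j).le ht h0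
      rwa [add_sub_cancel] at this) x
  rwa [LinearMap.sub_apply] at this

theorem aux_contr {n : ℕ} (A : Matrix (Fin n) (Fin n) ℝ) (hA : A.PosDef) {t : ℝ} (ht : 0 ≤ t)
    (x : EuclideanSpace ℝ (Fin n)) :
    ‖Matrix.toEuclideanLin (NormedSpace.exp (-(t • A))) x‖ ≤ ‖x‖ := by
  have := aux_norm hA.1.eigenvectorBasis (Matrix.toEuclideanLin (NormedSpace.exp (-(t • A))))
    _ 1 zero_le_one (fun j => aux_eig A hA.1 t j)
    (fun j => by
      have := (hA.eigenvalues_pos j).le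
      rw [abs_of_pos (Real.exp_pos _), Real.exp_le_one_iff]
      have : 0 ≤ t * hA.1.eigenvalues j := by positivity
      linarith) x
  rwa [one_mul] at this

/-- Hölder-1/2 equicontinuity of mild solutions away from `t = 0`
(the finite-dimensional δ = 0 case of estimates (sdd8-5-6)–(sdd8-5-8) of the paper):
if the right-hand side is bounded by `M` along the solution, then for `0 < t₁ ≤ t₂ ≤ T`,
`‖u(t₁) − u(t₂)‖ ≤ (t₂−t₁)^{1/2} [(2e t₁)^{−1/2}‖φ(0)‖ + 2(2e)^{−1/2} t₁^{1/2} M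
+ (t₂−t₁)^{1/2} M]`. -/
theorem mild_solution_holder_estimate
    {n : ℕ} (hn : 1 ≤ n) (r : ℝ) (hr : 0 < r)
    (A : Matrix (Fin n) (Fin n) ℝ) (hA : A.PosDef) (hAs : A.IsSymm)
    (d : ℝ) (hd : 0 ≤ d)
    (b : EuclideanSpace ℝ (Fin n) → EuclideanSpace ℝ (Fin n))
    (η : C(Set.Icc (-r) (0:ℝ), EuclideanSpace ℝ (Fin n)) → ℝ)
    (hηrange : ∀ φ, η φ ∈ Set.Icc (0:ℝ) r)
    (T : ℝ) (hT : 0 < T)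
    (φ : C(Set.Icc (-r) (0:ℝ), EuclideanSpace ℝ (Fin n)))
    (u : ℝ → EuclideanSpace ℝ (Fin n))
    (hu : IsMildSolution r hr T d A b η φ u)
    (M : ℝ) (hM : 0 ≤ M)
    (hMb : ∀ s ∈ Set.Icc (0:ℝ) T, ‖b (u (s - η (histSeg r u s))) - d • u s‖ ≤ M) :
    ∀ t₁ t₂ : ℝ, 0 < t₁ → t₁ ≤ t₂ → t₂ ≤ T →
      ‖u t₁ - u t₂‖ ≤ (t₂ - t₁) ^ ((1 / 2 : ℝ)) *
        ((2 * Real.exp 1 * t₁) ^ (-(1 / 2 : ℝ)) *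
            ‖φ ⟨0, Set.right_mem_Icc.mpr (by linarith)⟩‖ +
          2 * (2 * Real.exp 1) ^ (-(1 / 2 : ℝ)) * t₁ ^ ((1 / 2 : ℝ)) * M +
          (t₂ - t₁) ^ ((1 / 2 : ℝ)) * M) := by
  intro t₁ t₂ h1 h12 h2
  obtain ⟨-, -, hu⟩ := hu
  obtain ⟨i1, e1⟩ := hu t₁ ⟨h1.le, by linarith⟩
  obtain ⟨i2, e2⟩ := hu t₂ ⟨by linarith, h2⟩
  set f : ℝ → EuclideanSpace ℝ (Fin n) := fun s => b (u (s - η (histSeg r u s))) - d • u s with hf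
  set p := φ ⟨0, Set.right_mem_Icc.mpr (by linarith)⟩ with hp
  change IntervalIntegrable (fun s => Matrix.toEuclideanLin (NormedSpace.exp (-((t₁ - s) • A))) (f s)) _ _ _ at i1
  change IntervalIntegrable (fun s => Matrix.toEuclideanLin (NormedSpace.exp (-((t₂ - s) • A))) (f s)) _ _ _ at i2
  change u t₁ = _ + ∫ s in (0:ℝ)..t₁, Matrix.toEuclideanLin (NormedSpace.exp (-((t₁ - s) • A))) (f s) at e1
  change u t₂ = _ + ∫ s in (0:ℝ)..t₂, Matrix.toEuclideanLin (NormedSpace.exp (-((t₂ - s) • A))) (f s) at e2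
  replace hMb : ∀ s ∈ Set.Icc (0:ℝ) T, ‖f s‖ ≤ M := hMb
  have hE := Real.exp_pos 1
  have h0 : 0 ≤ t₂ - t₁ := by linarith
  have i2a := i2.mono_set (c := 0) (d := t₁) (by
    rw [Set.uIcc_of_le h1.le, Set.uIcc_of_le (by linarith)]; exact Set.Icc_subset_Icc le_rfl h12)
  have i2b := i2.mono_set (c := t₁) (d := t₂) (by
    rw [Set.uIcc_of_le h12, Set.uIcc_of_le (by linarith)]; exact Set.Icc_subset_Icc h1.le le_rfl)
  have key : u t₁ - u t₂ =
      (Matrix.toEuclideanLin (NormedSpace.exp (-(t₁ • A))) p -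
        Matrix.toEuclideanLin (NormedSpace.exp (-(t₂ • A))) p) +
      (∫ s in (0:ℝ)..t₁, (Matrix.toEuclideanLin (NormedSpace.exp (-((t₁ - s) • A))) (f s) -
        Matrix.toEuclideanLin (NormedSpace.exp (-((t₂ - s) • A))) (f s))) -
      ∫ s in t₁..t₂, Matrix.toEuclideanLin (NormedSpace.exp (-((t₂ - s) • A))) (f s) := by
    rw [e1, e2, intervalIntegral.integral_sub i1 i2a,
      ← intervalIntegral.integral_add_adjacent_intervals i2a i2b]
    abel
  have B1 := aux_diff A hA h1 h12 p
  have B3 : ‖∫ s in t₁..t₂, Matrix.toEuclideanLin (NormedSpace.exp (-((t₂ - s) • A))) (f s)‖ ≤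
      M * (t₂ - t₁) := by
    rw [← abs_of_nonneg h0]
    apply intervalIntegral.norm_integral_le_of_norm_le_const
    intro s hs
    rw [Set.uIoc_of_le h12] at hs
    exact (aux_contr A hA (by linarith [hs.2]) _).trans
      (hMb s ⟨by linarith [hs.1], by linarith [hs.2]⟩)
  set C := (t₂ - t₁) ^ (1 / 2 : ℝ) with hC
  have hC0 : 0 ≤ C := by positivity
  have hCC : C * C = t₂ - t₁ := by
    rw [hC, ← Real.sqrt_eq_rpow, Real.mul_self_sqrt h0]
  set D := (2 * Real.exp 1) ^ (-(1 / 2 : ℝ)) with hD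
  have hD0 : 0 ≤ D := by positivity
  have ig : IntervalIntegrable (fun s : ℝ => (t₁ - s) ^ (-(1 / 2 : ℝ))) MeasureTheory.volume 0 t₁ := by
    have := (intervalIntegral.intervalIntegrable_rpow' (a := t₁) (b := 0) (r := -(1 / 2 : ℝ))
      (by norm_num)).comp_sub_left t₁
    simpa using this
  have vg : ∫ s in (0:ℝ)..t₁, (t₁ - s) ^ (-(1 / 2 : ℝ)) = 2 * t₁ ^ (1 / 2 : ℝ) := by
    rw [intervalIntegral.integral_comp_sub_left (fun s => s ^ (-(1 / 2 : ℝ))) t₁, sub_self, sub_zero,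
      integral_rpow (Or.inl (by norm_num))]
    norm_num
    ring
  have B2 : ‖∫ s in (0:ℝ)..t₁, (Matrix.toEuclideanLin (NormedSpace.exp (-((t₁ - s) • A))) (f s) -
        Matrix.toEuclideanLin (NormedSpace.exp (-((t₂ - s) • A))) (f s))‖ ≤
      C * D * M * (2 * t₁ ^ (1 / 2 : ℝ)) := by
    rw [← vg, ← intervalIntegral.integral_const_mul]
    refine intervalIntegral.norm_integral_le_of_norm_le h1.le ?_ (ig.const_mul _)
    have hne : ∀ᵐ s : ℝ ∂MeasureTheory.volume, s ≠ t₁ := by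
      simp [MeasureTheory.ae_iff]
    filter_upwards [hne] with s hs hs'
    have hlt : s < t₁ := lt_of_le_of_ne hs'.2 hs
    have q := aux_diff A hA (t := t₁ - s) (t' := t₂ - s) (by linarith) (by linarith) (f s)
    rw [sub_sub_sub_cancel_right, ← hC, ← hD] at q
    refine q.trans ?_
    have hm := hMb s ⟨hs'.1.le, by linarith⟩
    have : 0 ≤ (t₁ - s) ^ (-(1 / 2 : ℝ)) := Real.rpow_nonneg (by linarith) _
    calc _ ≤ C * (D * (t₁ - s) ^ (-(1 / 2 : ℝ))) * M := by gcongr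
      _ = _ := by ring
  rw [key, Real.mul_rpow (by positivity) h1.le, ← hD]
  refine (norm_sub_le _ _).trans ((add_le_add_left (norm_add_le _ _) _).trans ?_)
  have : M * (t₂ - t₁) = C * (C * M) := by rw [← hCC]; ring
  linarith
end
end
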